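/- arXiv:2604.05304 — 5 statements merged into one kernel-verified Lean document; each statement's English description precedes it below -/
import Mathlib

section
/- The set of matchable positive integers has asymptotic density α, i.e., #{n ≤ x : n is matchable}/x → α as x → ∞, where α = ∏_p (1 − p^{−p}) over all primes p. -/
/-- A positive integer `n` is matchable if there is a bijection `ψ` from the set of
divisors of `n` to `{1, 2, ..., τ(n)}` with `gcd(d, ψ(d)) = 1` for every divisor `d`. -/
def Matchable (n : ℕ) : Prop :=
  ∃ ψ : ℕ → ℕ, Set.BijOn ψ ↑n.divisors ↑(Finset.Icc 1 n.divisors.card) ∧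
    ∀ d ∈ n.divisors, Nat.gcd d (ψ d) = 1

/-- `α = ∏_p (1 - p^{-p})`, the product over all primes `p`. -/
noncomputable def alphaConst : ℝ :=
  ∏' p : Nat.Primes, (1 - 1 / ((p : ℕ) : ℝ) ^ (p : ℕ))

/-!
For every large `K`, the matchable integers differ from those with `p ^ p ∤ n` for all primes
`p ≤ K` by a set of small upper density, and the latter have density `∏_{p ≤ K} (1 - p^{-p})`.

If `p ^ p ∣ n`, then `{1, …, τ(n)}` has more multiples of `p` than `n` has divisors prime to `p`, as
soon as `n` has enough other prime factors.

Conversely, suppose that `p ^ a_p` exactly divides `n`, with `a_p + 1 ≤ p` for all `p`. The primes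
with `a_p + 1 = p` leave no room: a divisor avoids `p` exactly as often as an integer is divisible
by `p`. There `y` is sent to the divisor with `p`-part `p ^ (y mod p)`, which leaves a matching
problem in each residue class modulo `∏ p`, for a smooth part `u` of `n`, with `a_p + 1 < p`, and a
rough squarefree part `v`. It is solved by Hall's theorem. For a set `S` of residues the sets of
primes of `u` dividing a member of `S` generate an increasing family; the divisors of `u` having a
neighbour in `S` correspond to this family under independent choices with probabilities
`1 / (a_p + 1)`, while `S` itself is bounded by its probability for the parameters `1 / p`.
Monotonicity in the parameters gives Hall's inequality with a gain, which absorbs the effect of `v`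
for all but few `n`, by a first-moment estimate.
-/

namespace MatchableDensity

open Finset Filter Topology

/-! ### Random subsets -/

section SubsetProb

variable {ι : Type*} [DecidableEq ι] {P : Finset ι} {r s : ι → ℝ} {U V : Set (Finset ι)}

open Classical in
/-- The probability that a random subset `B` of `P`, containing each `i ∈ P` independently with
probability `r i`, belongs to the family `U`. -/
noncomputable def subsetProb (P : Finset ι) (r : ι → ℝ) (U : Set (Finset ι)) : ℝ :=
  ∑ B ∈ P.powerset with B ∈ U, (∏ i ∈ B, r i) * ∏ i ∈ P \ B, (1 - r i)

lemma subsetProb_empty_of_mem (r : ι → ℝ) (hU : ∅ ∈ U) : subsetProb ∅ r U = 1 := by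
  simp [subsetProb, filter_singleton, hU]

lemma subsetProb_eq_zero (r : ι → ℝ) (hU : ∀ B ⊆ P, B ∉ U) : subsetProb P r U = 0 := by
  classical
  exact sum_eq_zero fun B hB =>
    absurd (mem_filter.1 hB).2 (hU B (mem_powerset.1 (mem_filter.1 hB).1))

lemma subsetProb_insert {q : ι} (hq : q ∉ P) (r : ι → ℝ) (U : Set (Finset ι)) :
    subsetProb (insert q P) r U
      = r q * subsetProb P r (insert q ⁻¹' U) + (1 - r q) * subsetProb P r U := by
  classical
  simp only [subsetProb, sum_filter, Set.mem_preimage]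
  rw [sum_powerset_insert hq, add_comm, mul_sum, mul_sum]
  congr 1 <;> refine sum_congr rfl fun B hB => ?_
  · rw [insert_sdiff_insert, prod_insert (notMem_mono (mem_powerset.1 hB) hq),
      sdiff_insert_of_notMem hq, mul_ite, mul_zero, mul_assoc]
  · rw [insert_sdiff_of_notMem _ (notMem_mono (mem_powerset.1 hB) hq),
      prod_insert (notMem_mono sdiff_subset hq), mul_ite, mul_zero, mul_left_comm]

lemma prod_mul_prod_one_sub_nonneg (h0 : ∀ i ∈ P, 0 ≤ r i) (h1 : ∀ i ∈ P, r i ≤ 1)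
    {B : Finset ι} (hB : B ⊆ P) : 0 ≤ (∏ i ∈ B, r i) * ∏ i ∈ P \ B, (1 - r i) :=
  mul_nonneg (prod_nonneg fun i hi => h0 i (hB hi))
    (prod_nonneg fun i hi => sub_nonneg.2 (h1 i (sdiff_subset hi)))

lemma subsetProb_nonneg (h0 : ∀ i ∈ P, 0 ≤ r i) (h1 : ∀ i ∈ P, r i ≤ 1) :
    0 ≤ subsetProb P r U := by
  classical
  exact sum_nonneg fun B hB =>
    prod_mul_prod_one_sub_nonneg h0 h1 (mem_powerset.1 (mem_filter.1 hB).1)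

lemma subsetProb_mono (h0 : ∀ i ∈ P, 0 ≤ r i) (h1 : ∀ i ∈ P, r i ≤ 1) (hUV : U ⊆ V) :
    subsetProb P r U ≤ subsetProb P r V := by
  classical
  exact sum_le_sum_of_subset_of_nonneg (monotone_filter_right _ fun B _ hB => hUV hB)
    fun B hB _ => prod_mul_prod_one_sub_nonneg h0 h1 (mem_powerset.1 (mem_filter.1 hB).1)

lemma prod_le_subsetProb (h0 : ∀ i ∈ P, 0 ≤ r i) (h1 : ∀ i ∈ P, r i ≤ 1) (hP : P ∈ U) :
    ∏ i ∈ P, r i ≤ subsetProb P r U := by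
  classical
  have h := single_le_sum (f := fun B => (∏ i ∈ B, r i) * ∏ i ∈ P \ B, (1 - r i))
    (fun B hB => prod_mul_prod_one_sub_nonneg h0 h1 (mem_powerset.1 (mem_filter.1 hB).1))
    (mem_filter.2 ⟨mem_powerset_self P, hP⟩)
  simpa [subsetProb] using h

lemma isUpperSet_preimage_insert (hU : IsUpperSet U) (q : ι) :
    IsUpperSet (insert q ⁻¹' U) :=
  hU.preimage fun _ _ => insert_subset_insert q

lemma subsetProb_le_of_le (h0 : ∀ i ∈ P, 0 ≤ r i) (hrs : ∀ i ∈ P, r i ≤ s i)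
    (h1 : ∀ i ∈ P, s i ≤ 1) (hU : IsUpperSet U) : subsetProb P r U ≤ subsetProb P s U := by
  induction P using Finset.induction_on generalizing U with
  | empty => simp [subsetProb, sum_filter]
  | insert q P hq ih =>
    rw [forall_mem_insert] at h0 hrs h1
    have without_q := ih h0.2 hrs.2 h1.2 hU
    have with_q := ih h0.2 hrs.2 h1.2 (isUpperSet_preimage_insert hU q)
    have hsub : subsetProb P s U ≤ subsetProb P s (insert q ⁻¹' U) :=
      subsetProb_mono (fun i hi => (h0.2 i hi).trans (hrs.2 i hi)) h1.2
        fun B => hU (subset_insert q B)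
    have hrq : 0 ≤ r q := h0.1
    have hrsq : 0 ≤ s q - r q := sub_nonneg.2 hrs.1
    have hrq1 : 0 ≤ 1 - r q := sub_nonneg.2 (hrs.1.trans h1.1)
    rw [subsetProb_insert hq, subsetProb_insert hq]
    linear_combination r q * with_q + (1 - r q) * without_q + (s q - r q) * hsub

-- A nontrivial increasing family has a pivotal coordinate, and raising that coordinate alone
-- already gains `c * ∏ s`.
lemma subsetProb_add_prod_le {c : ℝ} (hc : 0 ≤ c) (h0 : ∀ i ∈ P, 0 ≤ r i)
    (hrs : ∀ i ∈ P, r i + c * s i ≤ s i) (hs0 : ∀ i ∈ P, 0 ≤ s i) (hs : ∀ i ∈ P, s i ≤ 1 / 2)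
    (hU : IsUpperSet U) (hfull : P ∈ U) (hempty : ∅ ∉ U) :
    subsetProb P r U + c * ∏ i ∈ P, s i ≤ subsetProb P s U := by
  induction P using Finset.induction_on generalizing U with
  | empty => exact absurd hfull hempty
  | insert q P hq ih =>
    rw [forall_mem_insert] at h0 hrs hs0 hs
    have hrs' : ∀ i ∈ P, r i ≤ s i := fun i hi =>
      (le_add_of_nonneg_right (mul_nonneg hc (hs0.2 i hi))).trans (hrs.2 i hi)
    have hs1 : ∀ i ∈ P, s i ≤ 1 := fun i hi => (hs.2 i hi).trans (by norm_num)
    have with_q := subsetProb_le_of_le h0.2 hrs' hs1 (isUpperSet_preimage_insert hU q)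
    have hrq : 0 ≤ r q := h0.1
    have hcq : 0 ≤ c * s q := mul_nonneg hc hs0.1
    have hrsq : 0 ≤ s q - r q := by linarith [hrs.1]
    rw [subsetProb_insert hq, subsetProb_insert hq, prod_insert hq]
    by_cases hPU : P ∈ U
    · have without_q := ih h0.2 hrs.2 hs0.2 hs.2 hU hPU hempty
      have hsub : subsetProb P s U ≤ subsetProb P s (insert q ⁻¹' U) :=
        subsetProb_mono hs0.2 hs1 fun B => hU (subset_insert q B)
      have hrq1 : 0 ≤ 1 - r q := by linarith [hs.1]
      have hgain : 0 ≤ (1 - r q - s q) * (c * ∏ i ∈ P, s i) :=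
        mul_nonneg (by linarith [hs.1]) (mul_nonneg hc (prod_nonneg hs0.2))
      linear_combination r q * with_q + (1 - r q) * without_q + (s q - r q) * hsub + hgain
    · have hzero (t : ι → ℝ) : subsetProb P t U = 0 :=
        subsetProb_eq_zero t fun B hB hBU => hPU (hU hB hBU)
      have hpivot : ∏ i ∈ P, s i ≤ subsetProb P s (insert q ⁻¹' U) :=
        prod_le_subsetProb hs0.2 hs1 hfull
      have hnonneg : 0 ≤ subsetProb P s (insert q ⁻¹' U) := subsetProb_nonneg hs0.2 hs1
      rw [hzero, hzero]
      linear_combination r q * with_q + subsetProb P s (insert q ⁻¹' U) * hrs.1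
        + c * s q * hpivot

end SubsetProb

/-! ### Counting divisors and residues by the primes dividing them -/

section Counting

open Classical in
lemma card_filter_divisors_mul {m n : ℕ} (hmn : m.Coprime n) (R : ℕ → Prop) :
    #{d ∈ (m * n).divisors | R d} = ∑ i ∈ m.divisors, #{e ∈ n.divisors | R (i * e)} := by
  simp only [card_filter]
  rw [Nat.divisors_mul, mul_def, sum_image hmn.mul_injOn_divisors, sum_product]

lemma filter_not_dvd_prime_pow_mul {P : Finset ℕ} (hP : ∀ p ∈ P, p.Prime) {q : ℕ} (hq : q.Prime)
    (hqP : q ∉ P) {i : ℕ} (hi : i ≠ 0) (e : ℕ) :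
    {p ∈ insert q P | ¬ p ∣ q ^ i * e} = {p ∈ P | ¬ p ∣ e} := by
  rw [filter_insert, if_neg (not_not.2 ((dvd_pow_self q hi).mul_right e))]
  refine filter_congr fun p hp => not_congr ?_
  have hpq : p.Coprime q := (Nat.coprime_primes (hP p hp) hq).2 (ne_of_mem_of_not_mem hp hqP)
  exact (hpq.pow_right i).dvd_mul_left

-- A random divisor of `∏ p ^ a p` misses the prime `p` with probability `1 / (a p + 1)`,
-- independently over `p`.
open Classical in
lemma card_divisors_filter_not_dvd {P : Finset ℕ} (hP : ∀ p ∈ P, p.Prime) (a : ℕ → ℕ)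
    (U : Set (Finset ℕ)) :
    (#{d ∈ (∏ p ∈ P, p ^ a p).divisors | {p ∈ P | ¬ p ∣ d} ∈ U} : ℝ)
      = (∏ p ∈ P, ((a p : ℝ) + 1)) * subsetProb P (fun p => 1 / ((a p : ℝ) + 1)) U := by
  induction P using Finset.induction_on generalizing U with
  | empty => by_cases hU : ∅ ∈ U <;> simp [subsetProb, filter_singleton, hU]
  | insert q P hqP ih =>
    rw [forall_mem_insert] at hP
    have hcop : q.Coprime (∏ p ∈ P, p ^ a p) :=
      Nat.Coprime.prod_right fun p hp => Nat.Coprime.pow_right _ <|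
        (Nat.coprime_primes hP.1 (hP.2 p hp)).2 (ne_of_mem_of_not_mem hp hqP).symm
    have hmiss : #{e ∈ (∏ p ∈ P, p ^ a p).divisors | {p ∈ insert q P | ¬ p ∣ q ^ 0 * e} ∈ U}
        = #{e ∈ (∏ p ∈ P, p ^ a p).divisors | {p ∈ P | ¬ p ∣ e} ∈ insert q ⁻¹' U} := by
      refine congrArg card (filter_congr fun e he => ?_)
      have hqe : ¬ q ∣ e := fun h =>
        hP.1.coprime_iff_not_dvd.1 hcop (h.trans (Nat.dvd_of_mem_divisors he))
      rw [pow_zero, one_mul, filter_insert, if_pos hqe, Set.mem_preimage]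
    have hhit (i : ℕ) :
        #{e ∈ (∏ p ∈ P, p ^ a p).divisors | {p ∈ insert q P | ¬ p ∣ q ^ (i + 1) * e} ∈ U}
          = #{e ∈ (∏ p ∈ P, p ^ a p).divisors | {p ∈ P | ¬ p ∣ e} ∈ U} := by
      simp only [filter_not_dvd_prime_pow_mul hP.2 hP.1 hqP i.succ_ne_zero]
    rw [prod_insert hqP, card_filter_divisors_mul (hcop.pow_left _),
      Nat.sum_divisors_prime_pow hP.1, sum_range_succ', hmiss, sum_congr rfl fun i _ => hhit i,
      sum_const, card_range, smul_eq_mul]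
    push_cast
    rw [ih hP.2 U, ih hP.2, prod_insert hqP, subsetProb_insert hqP]
    field_simp
    ring

lemma card_modEq_le (X v : ℕ) {m : ℕ} (hm : 0 < m) :
    (#{y ∈ Ioc 0 X | y ≡ v [MOD m]} : ℝ) ≤ (X : ℝ) / m + 1 := by
  have hcard := Nat.Ioc_filter_modEq_card 0 X hm v
  have hX := Int.floor_le (((X : ℚ) - v) / m)
  have h0 := Int.lt_floor_add_one ((((0 : ℕ) : ℚ) - v) / m)
  have key : (#{y ∈ Ioc 0 X | y ≡ v [MOD m]} : ℚ) ≤ (X : ℚ) / m + 1 := by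
    rw [← Int.cast_natCast, hcard, Int.cast_max, Int.cast_zero, Int.cast_sub]
    refine max_le ?_ (by positivity)
    have hdiff : ((X : ℚ) - v) / m - (((0 : ℕ) : ℚ) - v) / m = X / m := by
      push_cast
      ring
    linarith
  have := (Rat.cast_le (K := ℝ)).2 key
  push_cast at this
  exact this

lemma card_modEq_mul (T v : ℕ) {m : ℕ} (hm : 0 < m) :
    #{y ∈ Ioc 0 (m * T) | y ≡ v [MOD m]} = T := by
  have hshift : (((m * T : ℕ) : ℚ) - v) / m = (((0 : ℕ) : ℚ) - v) / m + (T : ℤ) := by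
    have : (m : ℚ) ≠ 0 := by positivity
    push_cast
    field_simp
    ring
  have hcard := Nat.Ioc_filter_modEq_card 0 (m * T) hm v
  rw [hshift, Int.floor_add_intCast, add_sub_cancel_left, max_eq_left (by positivity)] at hcard
  exact_mod_cast hcard

lemma card_dvd_le (X t : ℕ) : (#{y ∈ Ioc 0 X | t ∣ y} : ℝ) ≤ X * (1 / (t : ℝ)) := by
  rw [Nat.Ioc_filter_dvd_card_eq_div, mul_one_div]
  exact Nat.cast_div_le

lemma exists_modEq_mul_of_modEq_of_mod_eq {m q : ℕ} (hmq : m.Coprime q) (v j : ℕ) :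
    ∃ z, ∀ y, y ≡ v [MOD m] → y % q = j → y ≡ z [MOD m * q] := by
  obtain ⟨z, hzm, hzq⟩ := Nat.chineseRemainder hmq v j
  refine ⟨z, fun y hyv hyj => (Nat.modEq_and_modEq_iff_modEq_mul hmq).1 ⟨hyv.trans hzm.symm, ?_⟩⟩
  exact (hyj ▸ (Nat.mod_modEq y q).symm : y ≡ j [MOD q]).trans hzq.symm

lemma card_le_of_card_mod_le {Y : Finset ℕ} {q : ℕ} (hq : 0 < q) {a b : ℝ}
    (hzero : (#{y ∈ Y | y % q = 0} : ℝ) ≤ a)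
    (hother : ∀ j ∈ (range q).erase 0, (#{y ∈ Y | y % q = j} : ℝ) ≤ b) :
    (#Y : ℝ) ≤ a + ((q : ℝ) - 1) * b := by
  have hsum := sum_le_card_nsmul _ _ _ hother
  rw [card_erase_of_mem (mem_range.2 hq), card_range, nsmul_eq_mul, Nat.cast_pred hq] at hsum
  rw [card_eq_sum_card_fiberwise (f := (· % q)) (t := range q)
    fun y _ => mem_range.2 (Nat.mod_lt y hq), Nat.cast_sum, ← add_sum_erase _ _ (mem_range.2 hq)]
  exact add_le_add hzero hsum

-- A random member of a class modulo `m` is divisible by `p` with probability about `1 / p`,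
-- independently over `p`.
open Classical in
lemma card_modEq_filter_dvd_le {P : Finset ℕ} (hP : ∀ p ∈ P, p.Prime) {m : ℕ} (hm : 0 < m)
    (hmP : ∀ p ∈ P, m.Coprime p) (X v : ℕ) (U : Set (Finset ℕ)) :
    (#{y ∈ Ioc 0 X | y ≡ v [MOD m] ∧ {p ∈ P | p ∣ y} ∈ U} : ℝ)
      ≤ X / m * subsetProb P (fun p => 1 / (p : ℝ)) U + ∏ p ∈ P, (p : ℝ) := by
  induction P using Finset.induction_on generalizing m v U with
  | empty =>
    by_cases hU : ∅ ∈ U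
    · simpa [hU, subsetProb_empty_of_mem] using card_modEq_le X v hm
    · simp [hU, subsetProb_eq_zero]
  | insert q P hqP ih =>
    rw [forall_mem_insert] at hP hmP
    have hq0 : 0 < q := hP.1.pos
    have hmq (p : ℕ) (hp : p ∈ P) : (m * q).Coprime p := (hmP.2 p hp).mul_left <|
      (Nat.coprime_primes hP.1 (hP.2 p hp)).2 (ne_of_mem_of_not_mem hp hqP).symm
    set Y : Finset ℕ := {y ∈ Ioc 0 X | y ≡ v [MOD m] ∧ {p ∈ insert q P | p ∣ y} ∈ U}
    have hclass (j : ℕ) (V : Set (Finset ℕ))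
        (hV : ∀ y, y % q = j → {p ∈ insert q P | p ∣ y} ∈ U → {p ∈ P | p ∣ y} ∈ V) :
        (#{y ∈ Y | y % q = j} : ℝ)
          ≤ X / (m * q) * subsetProb P (fun p => 1 / (p : ℝ)) V + ∏ p ∈ P, (p : ℝ) := by
      obtain ⟨z, hz⟩ := exists_modEq_mul_of_modEq_of_mod_eq hmP.1 v j
      have h := ih hP.2 (Nat.mul_pos hm hq0) hmq z V
      rw [Nat.cast_mul] at h
      refine (Nat.cast_le.2 (card_le_card fun y hy => ?_)).trans h
      obtain ⟨⟨hyX, hyv, hyU⟩, hyj⟩ := by simpa only [Y, mem_filter] using hy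
      exact mem_filter.2 ⟨hyX, hz y hyv hyj, hV y hyj hyU⟩
    have hzero := hclass 0 (insert q ⁻¹' U) fun y hy hyU => by
      rwa [filter_insert, if_pos (Nat.dvd_of_mod_eq_zero hy)] at hyU
    have hother : ∀ j ∈ (range q).erase 0, _ := fun j hj => hclass j U fun y hy hyU => by
      have hqy : ¬ q ∣ y := fun h =>
        (mem_erase.1 hj).1 (hy.symm.trans (Nat.mod_eq_zero_of_dvd h))
      rwa [filter_insert, if_neg hqy] at hyU
    refine (card_le_of_card_mod_le hq0 hzero hother).trans_eq ?_
    have hq0' : (q : ℝ) ≠ 0 := by positivity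
    rw [prod_insert hqP, subsetProb_insert hqP]
    field_simp
    ring

end Counting

/-! ### Hall's condition in a residue class -/

section Hall

/-- The neighbourhood of `S` in the coprimality graph between the integers and the divisors
of `m`. -/
def coprimeDivisors (m : ℕ) (S : Finset ℕ) : Finset ℕ :=
  {d ∈ m.divisors | ∃ y ∈ S, d.Coprime y}

/-- The increasing family generated by the sets of primes of `P` dividing a member of `S`. -/
def dvdPatterns (P S : Finset ℕ) : UpperSet (Finset ℕ) :=
  upperClosure ((fun y => {p ∈ P | p ∣ y}) '' S)

/-- The sum of `1 / t` over the divisors `t > 1` of `v`: it bounds the proportion of integers that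
are not coprime to `v`. -/
noncomputable def nontrivialDivisorSum (v : ℕ) : ℝ :=
  ∑ t ∈ v.divisors.erase 1, 1 / (t : ℝ)

variable {S : Finset ℕ} {u v : ℕ}

lemma exists_injOn_of_hall {ι α : Type*} [DecidableEq α] [Nonempty α] (Y : Finset ι)
    (t : ι → Finset α) (hall : ∀ S ⊆ Y, #S ≤ #(S.biUnion t)) :
    ∃ f : ι → α, (∀ y ∈ Y, f y ∈ t y) ∧ Set.InjOn f Y := by
  classical
  have hall' (S : Finset Y) : #S ≤ #(S.biUnion fun y => t y) := by
    have h := hall (S.map (.subtype _)) fun _ => property_of_mem_map_subtype S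
    rwa [card_map, map_eq_image, image_biUnion] at h
  obtain ⟨f, hf, hft⟩ := (all_card_le_biUnion_card_iff_exists_injective _).1 hall'
  refine ⟨fun y => if hy : y ∈ Y then f ⟨y, hy⟩ else Classical.arbitrary α, fun y hy => ?_,
    fun x hx y hy hxy => ?_⟩
  · simpa only [hy, dif_pos] using hft ⟨y, hy⟩
  · simp only [mem_coe.1 hx, mem_coe.1 hy, dif_pos] at hxy
    exact congrArg Subtype.val (hf hxy)

lemma sum_card_filter_dvd_le {X : ℕ} (hS : S ⊆ Ioc 0 X) (D : Finset ℕ) :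
    (∑ y ∈ S, (#{t ∈ D | t ∣ y} : ℝ)) ≤ X * ∑ t ∈ D, 1 / (t : ℝ) := by
  rw [mul_sum]
  calc (∑ y ∈ S, (#{t ∈ D | t ∣ y} : ℝ)) = ∑ t ∈ D, (#{y ∈ S | t ∣ y} : ℝ) := by
        exact_mod_cast sum_card_bipartiteAbove_eq_sum_card_bipartiteBelow fun y t => t ∣ y
    _ ≤ ∑ t ∈ D, (X : ℝ) * (1 / t) := sum_le_sum fun t _ =>
        (Nat.cast_le.2 (card_le_card (filter_subset_filter _ hS))).trans (card_dvd_le X t)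

lemma card_filter_dvd_divisors_erase_one {y : ℕ} (hv : v ≠ 0) :
    #{t ∈ v.divisors.erase 1 | t ∣ y} + 1 = #(v.gcd y).divisors := by
  have herase : {t ∈ v.divisors.erase 1 | t ∣ y} = (v.gcd y).divisors.erase 1 := by
    ext t
    simp [Nat.dvd_gcd_iff, hv, and_assoc]
  rw [herase, card_erase_add_one (Nat.one_mem_divisors.2 (Nat.gcd_ne_zero_left hv))]

lemma two_le_card_divisors_gcd {y : ℕ} (hv : v ≠ 0) (hy : ¬ v.Coprime y) :
    2 ≤ #(v.gcd y).divisors :=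
  one_lt_card.2 ⟨1, Nat.one_mem_divisors.2 (Nat.gcd_ne_zero_left hv), v.gcd y,
    Nat.mem_divisors_self _ (Nat.gcd_ne_zero_left hv), Ne.symm hy⟩

lemma card_le_mul_nontrivialDivisorSum (hv : v ≠ 0) {X : ℕ} (hS : S ⊆ Ioc 0 X)
    (hcop : ∀ y ∈ S, ¬ v.Coprime y) : (#S : ℝ) ≤ X * nontrivialDivisorSum v := by
  refine le_trans ?_ (sum_card_filter_dvd_le hS (v.divisors.erase 1))
  rw [card_eq_sum_ones]
  push_cast
  refine sum_le_sum fun y hy => ?_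
  have := two_le_card_divisors_gcd hv (hcop y hy)
  have := card_filter_dvd_divisors_erase_one (y := y) hv
  exact_mod_cast (by omega : 1 ≤ #{t ∈ v.divisors.erase 1 | t ∣ y})

lemma sum_card_divisors_gcd_le (hv : v ≠ 0) {X : ℕ} (hS : S ⊆ Ioc 0 X)
    (hcop : ∀ y ∈ S, ¬ v.Coprime y) :
    (∑ y ∈ S, (#(v.gcd y).divisors : ℝ)) ≤ 2 * X * nontrivialDivisorSum v := by
  rw [mul_assoc, nontrivialDivisorSum]
  refine le_trans ?_
    (mul_le_mul_of_nonneg_left (sum_card_filter_dvd_le hS (v.divisors.erase 1)) zero_le_two)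
  rw [mul_sum]
  refine sum_le_sum fun y hy => ?_
  have := two_le_card_divisors_gcd hv (hcop y hy)
  have := card_filter_dvd_divisors_erase_one (y := y) hv
  exact_mod_cast (by omega : #(v.gcd y).divisors ≤ 2 * #{t ∈ v.divisors.erase 1 | t ∣ y})

lemma coprimeDivisors_subset_mul_left (huv : u * v ≠ 0) :
    coprimeDivisors v S ⊆ coprimeDivisors (u * v) S :=
  filter_subset_filter _ (Nat.divisors_subset_of_dvd huv (dvd_mul_left v u))

lemma coprimeDivisors_mono {m : ℕ} {S' : Finset ℕ} (h : S ⊆ S') :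
    coprimeDivisors m S ⊆ coprimeDivisors m S' :=
  monotone_filter_right _ fun _ _ ⟨y, hy, hdy⟩ => ⟨y, h hy, hdy⟩

lemma coprimeDivisors_eq_divisors {m y : ℕ} (hy : y ∈ S) (hmy : m.Coprime y) :
    coprimeDivisors m S = m.divisors :=
  filter_true_of_mem fun _ hd => ⟨y, hy, hmy.coprime_dvd_left (Nat.dvd_of_mem_divisors hd)⟩

-- The `y ∈ S` minimising `τ (gcd v y)` is coprime to every divisor of `v / gcd v y`, and these
-- already number at least `#S`.
lemma card_le_card_coprimeDivisors_of_sum_le (hv : Squarefree v) (hS0 : 0 ∉ S)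
    (hsum : ∑ y ∈ S, #(v.gcd y).divisors ≤ #v.divisors) : #S ≤ #(coprimeDivisors v S) := by
  rcases S.eq_empty_or_nonempty with rfl | hS
  · simp
  obtain ⟨y, hy, hmin⟩ := exists_min_image S (fun y => #(v.gcd y).divisors) hS
  have hy0 : y ≠ 0 := fun h => hS0 (h ▸ hy)
  have hcop : (v / v.gcd y).Coprime y := Nat.coprime_div_gcd_of_squarefree hv hy0
  have hcard : #(v / v.gcd y).divisors * #(v.gcd y).divisors = #v.divisors := by
    rw [← (hcop.coprime_dvd_right (Nat.gcd_dvd_right v y)).card_divisors_mul,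
      Nat.div_mul_cancel (Nat.gcd_dvd_left v y)]
  have hle : #S * #(v.gcd y).divisors ≤ #(v / v.gcd y).divisors * #(v.gcd y).divisors := by
    rw [hcard, ← smul_eq_mul]
    exact (card_nsmul_le_sum _ _ _ hmin).trans hsum
  have hpos : 0 < #(v.gcd y).divisors :=
    card_pos.2 ⟨1, Nat.one_mem_divisors.2 (Nat.gcd_ne_zero_right hy0)⟩
  refine (Nat.le_of_mul_le_mul_right hle hpos).trans (card_le_card fun d hd => ?_)
  have hdv := Nat.dvd_of_mem_divisors hd
  exact mem_filter.2 ⟨Nat.mem_divisors.2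
    ⟨hdv.trans (Nat.div_dvd_of_dvd (Nat.gcd_dvd_left v y)), hv.ne_zero⟩,
    y, hy, hcop.coprime_dvd_left hdv⟩

lemma card_le_card_coprimeDivisors_of_forall_not_coprime (hv : Squarefree v) {X : ℕ}
    (hS : S ⊆ Ioc 0 X) (hcop : ∀ y ∈ S, ¬ v.Coprime y)
    (hX : 2 * X * nontrivialDivisorSum v ≤ #v.divisors) : #S ≤ #(coprimeDivisors v S) := by
  have hsum := (sum_card_divisors_gcd_le hv.ne_zero hS hcop).trans hX
  exact card_le_card_coprimeDivisors_of_sum_le hv (fun h => (mem_Ioc.1 (hS h)).1.ne' rfl)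
    (by exact_mod_cast hsum)

lemma card_coprimeDivisors_mul_card_divisors_le (huv : u.Coprime v)
    (hS : ∀ y ∈ S, v.Coprime y) :
    #(coprimeDivisors u S) * #v.divisors ≤ #(coprimeDivisors (u * v) S) := by
  rw [← card_product]
  refine card_le_card_of_injOn (fun x => x.1 * x.2) (fun x hx => ?_)
    (huv.mul_injOn_divisors.mono (coe_subset.2 (product_subset_product_left (filter_subset _ _))))
  obtain ⟨hx1, hx2⟩ := mem_product.1 (mem_coe.1 hx)
  obtain ⟨hxu, y, hy, hxy⟩ := mem_filter.1 hx1
  have hxv := Nat.dvd_of_mem_divisors hx2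
  refine mem_filter.2 ⟨?_, y, hy, hxy.mul_left ((hS y hy).coprime_dvd_left hxv)⟩
  rw [Nat.divisors_mul]
  exact Finset.mul_mem_mul hxu hx2

lemma coprime_iff_filter_dvd_subset {d y : ℕ} (hu : u ≠ 0) (hd : d ∣ u) :
    d.Coprime y ↔ {p ∈ u.primeFactors | p ∣ y} ⊆ {p ∈ u.primeFactors | ¬ p ∣ d} := by
  rw [← not_iff_not, Nat.Prime.not_coprime_iff_dvd, not_subset]
  simp only [mem_filter, not_and, not_not]
  constructor
  · rintro ⟨p, hp, hpd, hpy⟩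
    exact ⟨p, ⟨Nat.mem_primeFactors.2 ⟨hp, hpd.trans hd, hu⟩, hpy⟩, fun _ => hpd⟩
  · rintro ⟨p, ⟨hp, hpy⟩, hpd⟩
    exact ⟨p, Nat.prime_of_mem_primeFactors hp, hpd hp, hpy⟩

open Classical in
lemma coprimeDivisors_eq_filter_dvdPatterns (hu : u ≠ 0) :
    coprimeDivisors u S = {d ∈ u.divisors |
      {p ∈ u.primeFactors | ¬ p ∣ d} ∈ (dvdPatterns u.primeFactors S : Set (Finset ℕ))} := by
  refine filter_congr fun d hd => ?_
  simp [dvdPatterns, mem_upperClosure,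
    coprime_iff_filter_dvd_subset hu (Nat.dvd_of_mem_divisors hd)]

lemma card_coprimeDivisors_eq_subsetProb (hu : u ≠ 0) :
    (#(coprimeDivisors u S) : ℝ) = #u.divisors * subsetProb u.primeFactors
      (fun p => 1 / ((u.factorization p : ℝ) + 1)) (dvdPatterns u.primeFactors S) := by
  classical
  have h := card_divisors_filter_not_dvd (fun p => Nat.prime_of_mem_primeFactors (n := u))
    u.factorization (dvdPatterns u.primeFactors S)
  have hfac : ∏ p ∈ u.primeFactors, p ^ u.factorization p = u :=
    Nat.prod_factorization_pow_eq_self hu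
  rw [hfac] at h
  rw [coprimeDivisors_eq_filter_dvdPatterns hu, Nat.card_divisors hu]
  push_cast
  exact h

lemma card_divisors_mul_prod_one_div (hu : u ≠ 0) :
    (#u.divisors : ℝ) * ∏ p ∈ u.primeFactors, (1 / ((u.factorization p : ℝ) + 1)) = 1 := by
  rw [Nat.card_divisors hu]
  push_cast
  rw [← prod_mul_distrib]
  exact prod_eq_one fun p _ => mul_one_div_cancel (by positivity)

lemma card_le_subsetProb_dvdPatterns {P : Finset ℕ} (hP : ∀ p ∈ P, p.Prime) {Q : ℕ} (hQ : 0 < Q)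
    (hQP : ∀ p ∈ P, Q.Coprime p) {X r : ℕ} (hS : S ⊆ {y ∈ Ioc 0 X | y ≡ r [MOD Q]}) :
    (#S : ℝ) ≤ X / Q * subsetProb P (fun p => 1 / (p : ℝ)) (dvdPatterns P S)
      + ∏ p ∈ P, (p : ℝ) := by
  classical
  refine le_trans (Nat.cast_le.2 (card_le_card fun y hy => ?_))
    (card_modEq_filter_dvd_le hP hQ hQP X r _)
  obtain ⟨hyX, hyr⟩ := mem_filter.1 (hS hy)
  exact mem_filter.2 ⟨hyX, hyr, subset_upperClosure (Set.mem_image_of_mem _ hy)⟩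

lemma mem_dvdPatterns_self {P : Finset ℕ} (hS : S.Nonempty) : P ∈ dvdPatterns P S := by
  obtain ⟨y, hy⟩ := hS
  exact mem_upperClosure.2 ⟨_, Set.mem_image_of_mem _ hy, filter_subset _ _⟩

lemma empty_notMem_dvdPatterns (hu : u ≠ 0) (hcop : ∀ y ∈ S, ¬ u.Coprime y) :
    ∅ ∉ dvdPatterns u.primeFactors S := by
  intro h
  obtain ⟨_, ⟨y, hy, rfl⟩, hsub⟩ := mem_upperClosure.1 h
  exact hcop y hy ((coprime_iff_filter_dvd_subset hu dvd_rfl).2 (hsub.trans (empty_subset _)))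

-- The sets of primes of `u` dividing a member of `S` generate an increasing family. Such a family
-- is less likely for residues (parameters `1 / p`) than for divisors (parameters `1 / (a_p + 1)`).
lemma card_add_le_card_coprimeDivisors (hu : u ≠ 0) {Q : ℕ} (hQ : 0 < Q) (hQu : Q.Coprime u)
    {c : ℝ} (hc : 0 ≤ c)
    (hslack : ∀ p ∈ u.primeFactors, (u.factorization p : ℝ) + 1 ≤ (1 - c) * p) {T r : ℕ}
    (hS : S ⊆ {y ∈ Ioc 0 (Q * (#u.divisors * T)) | y ≡ r [MOD Q]}) (hSne : S.Nonempty)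
    (hcop : ∀ y ∈ S, ¬ u.Coprime y) :
    #S + c * T ≤ #(coprimeDivisors u S) * T + ∏ p ∈ u.primeFactors, (p : ℝ) := by
  classical
  set P := u.primeFactors
  have hP (p : ℕ) (hp : p ∈ P) : p.Prime := Nat.prime_of_mem_primeFactors hp
  have hgap := subsetProb_add_prod_le (P := P) (r := fun p => 1 / (p : ℝ))
    (s := fun p => 1 / ((u.factorization p : ℝ) + 1)) hc (fun p _ => by positivity)
    (fun p hp => by
      have hp0 : (0 : ℝ) < p := by exact_mod_cast (hP p hp).pos
      have := hslack p hp
      field_simp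
      linarith)
    (fun p _ => by positivity)
    (fun p hp => by
      have h : 1 ≤ u.factorization p :=
        (hP p hp).factorization_pos_of_dvd hu (Nat.dvd_of_mem_primeFactors hp)
      have h' : (1 : ℝ) ≤ u.factorization p := by exact_mod_cast h
      exact one_div_le_one_div_of_le (by norm_num) (by linarith))
    (dvdPatterns P S).upper (mem_dvdPatterns_self hSne) (empty_notMem_dvdPatterns hu hcop)
  have hresidues := card_le_subsetProb_dvdPatterns hP hQ
    (fun p hp => hQu.coprime_dvd_right (Nat.dvd_of_mem_primeFactors hp)) hS
  have hQ' : (Q : ℝ) ≠ 0 := by positivity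
  rw [Nat.cast_mul Q, mul_div_cancel_left₀ _ hQ'] at hresidues
  have hscaled := mul_le_mul_of_nonneg_left hgap (by positivity : (0 : ℝ) ≤ #u.divisors * T)
  rw [card_coprimeDivisors_eq_subsetProb hu]
  push_cast at hresidues
  linear_combination hresidues + hscaled - c * T * card_divisors_mul_prod_one_div hu

-- If some member of `S` is coprime to `u * v`, all divisors are neighbours. Otherwise the members
-- coprime to `v` have a surplus of neighbours, which pays for the few remaining ones; if no member
-- is coprime to `v`, a single one already has enough neighbours.
lemma card_le_card_coprimeDivisors (hu : u ≠ 0) (hv : Squarefree v) (huv : u.Coprime v) {Q : ℕ}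
    (hQ : 0 < Q) (hQu : Q.Coprime u) {c : ℝ} (hc0 : 0 ≤ c) (hc1 : c ≤ 1)
    (hslack : ∀ p ∈ u.primeFactors, (u.factorization p : ℝ) + 1 ≤ (1 - c) * p)
    (hrough : 2 * Q * #u.divisors * nontrivialDivisorSum v ≤ c)
    (hrad : 2 * ∏ p ∈ u.primeFactors, (p : ℝ) ≤ c * #v.divisors) {r : ℕ}
    (hS : S ⊆ {y ∈ Ioc 0 (Q * #(u * v).divisors) | y ≡ r [MOD Q]}) :
    #S ≤ #(coprimeDivisors (u * v) S) := by
  have hv0 : v ≠ 0 := hv.ne_zero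
  have hSX : S ⊆ Ioc 0 (Q * #(u * v).divisors) := hS.trans (filter_subset _ _)
  by_cases hcop : ∃ y ∈ S, (u * v).Coprime y
  · obtain ⟨y, hy, hyc⟩ := hcop
    rw [coprimeDivisors_eq_divisors hy hyc]
    exact (card_le_card hS).trans (card_modEq_mul _ r hQ).le
  push Not at hcop
  rw [huv.card_divisors_mul] at hS hSX
  set X := Q * (#u.divisors * #v.divisors)
  have hX : 2 * X * nontrivialDivisorSum v ≤ c * #v.divisors := by
    simp only [X]
    push_cast
    linear_combination (#v.divisors : ℝ) * hrough
  by_cases hS0 : ∃ y ∈ S, v.Coprime y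
  · set S₀ := {y ∈ S | v.Coprime y}
    have hS₀v : ∀ y ∈ S₀, v.Coprime y := fun y hy => (mem_filter.1 hy).2
    have hS₀u : ∀ y ∈ S₀, ¬ u.Coprime y := fun y hy h =>
      hcop y (mem_filter.1 hy).1 (h.mul_left (hS₀v y hy))
    have hgain := card_add_le_card_coprimeDivisors hu hQ hQu hc0 hslack
      ((filter_subset _ S).trans hS) (filter_nonempty_iff.2 hS0) hS₀u
    have hrest := card_le_mul_nontrivialDivisorSum hv0 ((filter_subset _ _).trans hSX)
      (S := {y ∈ S | ¬ v.Coprime y}) fun y hy => (mem_filter.1 hy).2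
    have hnbrs : (#(coprimeDivisors u S₀) * #v.divisors : ℝ) ≤ #(coprimeDivisors (u * v) S) := by
      exact_mod_cast (card_coprimeDivisors_mul_card_divisors_le huv hS₀v).trans
        (card_le_card (coprimeDivisors_mono (filter_subset _ _)))
    have hsplit : (#S : ℝ) = #S₀ + #{y ∈ S | ¬ v.Coprime y} := by
      exact_mod_cast (card_filter_add_card_filter_not _).symm
    have : (#S : ℝ) ≤ #(coprimeDivisors (u * v) S) := by linarith
    exact_mod_cast this
  · push Not at hS0
    have hle := hX.trans (mul_le_of_le_one_left (Nat.cast_nonneg _) hc1)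
    exact (card_le_card_coprimeDivisors_of_forall_not_coprime hv hSX hS0 hle).trans
      (card_le_card (coprimeDivisors_subset_mul_left (mul_ne_zero hu hv0)))

end Hall

/-! ### Gluing residue classes -/

section Gluing

lemma matchable_of_injOn {n : ℕ} (φ : ℕ → ℕ) (hmem : ∀ y ∈ Icc 1 #n.divisors, φ y ∈ n.divisors)
    (hcop : ∀ y ∈ Icc 1 #n.divisors, (φ y).Coprime y)
    (hinj : Set.InjOn φ (Icc 1 #n.divisors : Finset ℕ)) : Matchable n := by
  have hbij : Set.BijOn φ (Icc 1 #n.divisors : Finset ℕ) (n.divisors : Finset ℕ) :=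
    ⟨hmem, hinj, surjOn_of_injOn_of_card_le φ hmem hinj (by simp)⟩
  have hinv := hbij.invOn_invFunOn
  have hbij' := hbij.symm hinv.symm
  refine ⟨_, hbij', fun d hd => ?_⟩
  simpa only [hinv.2 hd] using hcop _ (hbij'.mapsTo hd)

/-- The divisor `∏ p ^ (y mod p)` of `∏ p ^ (p - 1)`, over the primes `p ∈ C`. It is coprime to `y`
and encodes the residue of `y` modulo `∏ p`. -/
def residueDivisor (C : Finset ℕ) (y : ℕ) : ℕ :=
  ∏ p ∈ C, p ^ (y % p)

variable {C : Finset ℕ}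

lemma residueDivisor_dvd (hC : ∀ p ∈ C, p.Prime) (y : ℕ) :
    residueDivisor C y ∣ ∏ p ∈ C, p ^ (p - 1) :=
  prod_dvd_prod_of_dvd _ _ fun p hp =>
    pow_dvd_pow _ (Nat.le_sub_one_of_lt (Nat.mod_lt y (hC p hp).pos))

lemma coprime_residueDivisor (hC : ∀ p ∈ C, p.Prime) (y : ℕ) : (residueDivisor C y).Coprime y := by
  refine Nat.Coprime.prod_left fun p hp => ?_
  by_cases hpy : p ∣ y
  · rw [Nat.mod_eq_zero_of_dvd hpy, pow_zero]
    exact Nat.coprime_one_left y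
  · exact ((hC p hp).coprime_iff_not_dvd.2 hpy).pow_left _

lemma factorization_residueDivisor (hC : ∀ p ∈ C, p.Prime) (y : ℕ) {p : ℕ} (hp : p ∈ C) :
    (residueDivisor C y).factorization p = y % p := by
  rw [residueDivisor, Nat.factorization_prod fun q hq => pow_ne_zero _ (hC q hq).ne_zero,
    sum_apply', sum_eq_single_of_mem p hp fun q hq hqp => by
      rw [(hC q hq).factorization_pow, Finsupp.single_eq_of_ne' hqp],
    (hC p hp).factorization_pow, Finsupp.single_eq_same]

lemma modEq_prod_of_residueDivisor_eq (hC : ∀ p ∈ C, p.Prime) {y z : ℕ}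
    (h : residueDivisor C y = residueDivisor C z) : y ≡ z [MOD ∏ p ∈ C, p] := by
  rw [Nat.modEq_iff_dvd, Int.natCast_dvd]
  refine prod_primes_dvd _ (fun p hp => (hC p hp).prime) fun p hp => ?_
  have hyz : y ≡ z [MOD p] := by
    rw [Nat.ModEq, ← factorization_residueDivisor hC y hp, h, factorization_residueDivisor hC z hp]
  exact Int.natCast_dvd.1 ((Nat.modEq_iff_dvd).1 hyz)

lemma card_divisors_prod_pow_pred (hC : ∀ p ∈ C, p.Prime) :
    #(∏ p ∈ C, p ^ (p - 1)).divisors = ∏ p ∈ C, p := by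
  simp_rw [← ArithmeticFunction.sigma_zero_apply]
  rw [ArithmeticFunction.isMultiplicative_sigma.map_prod _ _ fun p hp q hq hpq =>
    Nat.Coprime.pow _ _ ((Nat.coprime_primes (hC p hp) (hC q hq)).2 hpq)]
  refine prod_congr rfl fun p hp => ?_
  rw [ArithmeticFunction.sigma_zero_apply, Nat.divisors_prime_pow (hC p hp), card_map, card_range,
    Nat.sub_add_cancel (hC p hp).one_le]

lemma matchable_of_residue_classes {m : ℕ} (hC : ∀ p ∈ C, p.Prime)
    (hCm : (∏ p ∈ C, p ^ (p - 1)).Coprime m)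
    (hclass : ∀ r, ∃ f : ℕ → ℕ,
      (∀ y ∈ {y ∈ Ioc 0 ((∏ p ∈ C, p) * #m.divisors) | y ≡ r [MOD ∏ p ∈ C, p]},
        f y ∈ {d ∈ m.divisors | d.Coprime y}) ∧
      Set.InjOn f ({y ∈ Ioc 0 ((∏ p ∈ C, p) * #m.divisors) | y ≡ r [MOD ∏ p ∈ C, p]} :
        Finset ℕ)) :
    Matchable ((∏ p ∈ C, p ^ (p - 1)) * m) := by
  choose f hf hinj using hclass
  set Q := ∏ p ∈ C, p
  have hcrit (y : ℕ) : residueDivisor C y ∈ (∏ p ∈ C, p ^ (p - 1)).divisors :=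
    Nat.mem_divisors.2 ⟨residueDivisor_dvd hC y,
      prod_ne_zero_iff.2 fun p hp => pow_ne_zero _ (hC p hp).ne_zero⟩
  have hcard : #((∏ p ∈ C, p ^ (p - 1)) * m).divisors = Q * #m.divisors := by
    rw [hCm.card_divisors_mul, card_divisors_prod_pow_pred hC]
  have hmem (y : ℕ) (hy : y ∈ Icc 1 #((∏ p ∈ C, p ^ (p - 1)) * m).divisors) :
      y ∈ ({z ∈ Ioc 0 (Q * #m.divisors) | z ≡ y % Q [MOD Q]} : Finset ℕ) :=
    mem_filter.2 ⟨hcard ▸ hy, (Nat.mod_modEq y Q).symm⟩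
  have hfy (y : ℕ) (hy : y ∈ Icc 1 #((∏ p ∈ C, p ^ (p - 1)) * m).divisors) :
      f (y % Q) y ∈ m.divisors ∧ (f (y % Q) y).Coprime y :=
    mem_filter.1 (hf _ y (hmem y hy))
  refine matchable_of_injOn (fun y => residueDivisor C y * f (y % Q) y) (fun y hy => ?_)
    (fun y hy => (coprime_residueDivisor hC y).mul_left (hfy y hy).2) fun y hy z hz hyz => ?_
  · rw [Nat.divisors_mul]
    exact Finset.mul_mem_mul (hcrit y) (hfy y hy).1
  · obtain ⟨hcrit_eq, hf_eq⟩ := Prod.ext_iff.1 <| hCm.mul_injOn_divisors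
      (x₁ := (residueDivisor C y, f (y % Q) y)) (x₂ := (residueDivisor C z, f (z % Q) z))
      (mem_coe.2 (mem_product.2 ⟨hcrit y, (hfy y hy).1⟩))
      (mem_coe.2 (mem_product.2 ⟨hcrit z, (hfy z hz).1⟩)) hyz
    have hmod : y % Q = z % Q := modEq_prod_of_residueDivisor_eq hC hcrit_eq
    refine hinj (y % Q) (mem_coe.2 (hmem y hy)) (mem_coe.2 ?_) ?_
    · rw [hmod]
      exact hmem z hz
    · simpa only [hmod] using hf_eq

end Gluing

/-! ### Parts of an integer cut out by sets of primes -/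

section PrimePart

/-- The largest divisor of `n` all of whose prime factors satisfy `s` (and `1` when `n = 0`). -/
def primePart (n : ℕ) (s : ℕ → Prop) [DecidablePred s] : ℕ :=
  ∏ p ∈ n.primeFactors with s p, p ^ n.factorization p

/-- The `L`-rough part of `n`: its largest divisor without prime factors `p ≤ L`. -/
def roughPart (L n : ℕ) : ℕ :=
  primePart n (L < ·)

variable {n : ℕ} {s t : ℕ → Prop} [DecidablePred s] [DecidablePred t]

lemma primePart_ne_zero : primePart n s ≠ 0 :=
  prod_ne_zero_iff.2 fun _ hp =>
    pow_ne_zero _ (Nat.prime_of_mem_primeFactors (mem_filter.1 hp).1).ne_zero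

lemma factorization_primePart : (primePart n s).factorization = n.factorization.filter s := by
  have hprod : (n.factorization.filter s).prod (· ^ ·) = primePart n s := by
    refine prod_congr (Finsupp.support_filter ..) fun p hp => ?_
    rw [Finsupp.filter_apply_pos _ _ (mem_filter.1 hp).2]
  rw [← hprod, Nat.prod_pow_factorization_eq_self fun p hp => ?_]
  rw [Finsupp.support_filter] at hp
  exact Nat.prime_of_mem_primeFactors (mem_filter.1 hp).1

lemma primeFactors_primePart : (primePart n s).primeFactors = {p ∈ n.primeFactors | s p} := by
  rw [← Nat.support_factorization, factorization_primePart, Finsupp.support_filter,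
    Nat.support_factorization]

lemma factorization_primePart_of_mem {p : ℕ} (hp : p ∈ (primePart n s).primeFactors) :
    (primePart n s).factorization p = n.factorization p := by
  rw [primeFactors_primePart] at hp
  rw [factorization_primePart, Finsupp.filter_apply_pos s _ (mem_filter.1 hp).2]

lemma primePart_mul_primePart (hst : ∀ p ∈ n.primeFactors, s p → ¬ t p) :
    primePart n s * primePart n t = primePart n (fun p => s p ∨ t p) := by
  rw [primePart, primePart, primePart, filter_or, prod_union (disjoint_filter.2 hst)]

lemma primePart_eq_self (hn : n ≠ 0) (hs : ∀ p ∈ n.primeFactors, s p) : primePart n s = n := by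
  rw [primePart, filter_true_of_mem hs]
  exact Nat.prod_factorization_pow_eq_self hn

lemma coprime_primePart (hst : ∀ p ∈ n.primeFactors, s p → ¬ t p) :
    (primePart n s).Coprime (primePart n t) := by
  rw [← Nat.disjoint_primeFactors primePart_ne_zero primePart_ne_zero, primeFactors_primePart,
    primeFactors_primePart]
  exact disjoint_filter.2 hst

lemma card_divisors_primePart :
    #(primePart n s).divisors = ∏ p ∈ n.primeFactors with s p, (n.factorization p + 1) := by
  rw [Nat.card_divisors primePart_ne_zero, ← primeFactors_primePart]
  exact prod_congr rfl fun _ hp => by rw [factorization_primePart_of_mem hp]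

lemma card_primeFactors_le_card_divisors : #n.primeFactors ≤ #n.divisors :=
  card_le_card fun _ hp =>
    Nat.mem_divisors.2 ⟨Nat.dvd_of_mem_primeFactors hp, (Nat.mem_primeFactors.1 hp).2.2⟩

end PrimePart

/-! ### A sufficient condition for matchability -/

section Criterion

/-- The integers not divisible by `p ^ p` for any prime `p ≤ K`. -/
def powFree (K : ℕ) : Set ℕ :=
  {n | ∀ p ≤ K, p.Prime → ¬ p ^ p ∣ n}

/-- The integers divisible by `p ^ 2` for some prime `p > K`. -/
def withLargeSquare (K : ℕ) : Set ℕ :=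
  {n | ∃ p, p.Prime ∧ K < p ∧ p ^ 2 ∣ n}

/-- The integers with fewer than `M` prime factors exceeding `L`. -/
def fewLargePrimes (M L : ℕ) : Set ℕ :=
  {n | #{p ∈ n.primeFactors | L < p} < M}

/-- The size of the error terms in Hall's condition for `n`, when primes up to `K` count as small
and primes above `L` as large. -/
noncomputable def roughWeight (K L n : ℕ) : ℝ :=
  2 ^ #{p ∈ n.primeFactors | K < p ∧ p ≤ L} * nontrivialDivisorSum (roughPart L n)

/-- The primes `p` with `p ^ (p - 1)` exactly dividing `n`: for these, divisors of `n` are no more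
likely to avoid `p` than integers are to be divisible by `p`. -/
def criticalPrimes (n : ℕ) : Finset ℕ :=
  {p ∈ n.primeFactors | n.factorization p + 1 = p}

/-- The part of `n` composed of the primes up to `L` that are not critical. -/
def slackPart (L n : ℕ) : ℕ :=
  primePart n fun p => p ≤ L ∧ n.factorization p + 1 ≠ p

variable {n K L : ℕ}

lemma prod_criticalPrimes :
    ∏ p ∈ criticalPrimes n, p ^ (p - 1) = primePart n fun p => n.factorization p + 1 = p :=
  prod_congr rfl fun p hp => by rw [Nat.eq_sub_of_add_eq (mem_filter.1 hp).2]

lemma factorization_add_one_le (hn : n ≠ 0) (hpow : n ∈ powFree K) {p : ℕ} (hp : p.Prime)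
    (hpK : p ≤ K) : n.factorization p + 1 ≤ p := by
  have := (hp.pow_dvd_iff_le_factorization hn).not.1 (hpow p hpK hp)
  omega

lemma factorization_le_one (hn : n ≠ 0) (hsq : n ∉ withLargeSquare K) {p : ℕ} (hp : p.Prime)
    (hKp : K < p) : n.factorization p ≤ 1 := by
  have := (hp.pow_dvd_iff_le_factorization hn).not.1 fun h => hsq ⟨p, hp, hKp, h⟩
  omega

lemma factorization_add_one_ne (hn : n ≠ 0) (hsq : n ∉ withLargeSquare K) (hK : 2 ≤ K) {p : ℕ}
    (hp : p.Prime) (hKp : K < p) : n.factorization p + 1 ≠ p := by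
  have := factorization_le_one hn hsq hp hKp
  omega

lemma coprime_slackPart_roughPart : (slackPart L n).Coprime (roughPart L n) :=
  coprime_primePart fun _ _ hp => not_lt.2 hp.1

lemma slackPart_mul_roughPart :
    slackPart L n * roughPart L n
      = primePart n fun p => (p ≤ L ∧ n.factorization p + 1 ≠ p) ∨ L < p :=
  primePart_mul_primePart fun _ _ hp => not_lt.2 hp.1

lemma not_slack_or_rough_of_critical (hn : n ≠ 0) (hsq : n ∉ withLargeSquare K) (hK : 2 ≤ K)
    (hKL : K ≤ L) : ∀ p ∈ n.primeFactors, n.factorization p + 1 = p →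
      ¬ ((p ≤ L ∧ n.factorization p + 1 ≠ p) ∨ L < p) := by
  rintro p hp hcrit (⟨-, hne⟩ | hLp)
  · exact hne hcrit
  · exact factorization_add_one_ne hn hsq hK (Nat.prime_of_mem_primeFactors hp)
      (hKL.trans_lt hLp) hcrit

lemma coprime_prod_criticalPrimes (hn : n ≠ 0) (hsq : n ∉ withLargeSquare K) (hK : 2 ≤ K)
    (hKL : K ≤ L) :
    (∏ p ∈ criticalPrimes n, p ^ (p - 1)).Coprime (slackPart L n * roughPart L n) := by
  rw [slackPart_mul_roughPart, prod_criticalPrimes]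
  exact coprime_primePart (not_slack_or_rough_of_critical hn hsq hK hKL)

lemma prod_criticalPrimes_mul (hn : n ≠ 0) (hsq : n ∉ withLargeSquare K) (hK : 2 ≤ K)
    (hKL : K ≤ L) :
    (∏ p ∈ criticalPrimes n, p ^ (p - 1)) * (slackPart L n * roughPart L n) = n := by
  rw [slackPart_mul_roughPart, prod_criticalPrimes,
    primePart_mul_primePart (not_slack_or_rough_of_critical hn hsq hK hKL)]
  refine primePart_eq_self hn fun p _ => ?_
  have := le_or_gt p L
  tauto

lemma factorization_slackPart_add_one_le (hn : n ≠ 0) (hpow : n ∈ powFree K)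
    (hsq : n ∉ withLargeSquare K) (hK : 3 ≤ K) {p : ℕ} (hp : p ∈ (slackPart L n).primeFactors) :
    ((slackPart L n).factorization p : ℝ) + 1 ≤ (1 - 1 / K) * p := by
  rw [slackPart, factorization_primePart_of_mem hp]
  obtain ⟨hpn, -, hne⟩ := by simpa only [slackPart, primeFactors_primePart, mem_filter] using hp
  have hprime := Nat.prime_of_mem_primeFactors hpn
  have hK0 : (3 : ℝ) ≤ K := by exact_mod_cast hK
  suffices (n.factorization p + 1 : ℝ) * K ≤ (K - 1) * p by
    field_simp
    linarith
  rcases le_or_gt p K with hpK | hKp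
  · have := factorization_add_one_le hn hpow hprime hpK
    have hgap : (n.factorization p : ℝ) + 2 ≤ p := by
      exact_mod_cast (by omega : n.factorization p + 2 ≤ p)
    have : (p : ℝ) ≤ K := by exact_mod_cast hpK
    nlinarith
  · have hle : (n.factorization p : ℝ) ≤ 1 := by
      exact_mod_cast factorization_le_one hn hsq hprime hKp
    have : (K : ℝ) + 1 ≤ p := by exact_mod_cast hKp
    nlinarith

lemma prod_primes_le_factorial {A : Finset ℕ} {N : ℕ} (hA : ∀ p ∈ A, p.Prime ∧ p ≤ N) :
    ∏ p ∈ A, p ≤ N.factorial :=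
  Nat.le_of_dvd N.factorial_pos <| prod_primes_dvd _ (fun p hp => (hA p hp).1.prime)
    fun p hp => Nat.dvd_factorial (hA p hp).1.pos (hA p hp).2

lemma prod_criticalPrimes_le (hn : n ≠ 0) (hsq : n ∉ withLargeSquare K) (hK : 2 ≤ K) :
    ∏ p ∈ criticalPrimes n, p ≤ K.factorial := by
  refine prod_primes_le_factorial fun p hp => ?_
  obtain ⟨hpn, hcrit⟩ := mem_filter.1 hp
  have hprime := Nat.prime_of_mem_primeFactors hpn
  exact ⟨hprime, not_lt.1 fun hKp => factorization_add_one_ne hn hsq hK hprime hKp hcrit⟩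

lemma prod_primeFactors_slackPart_le :
    ∏ p ∈ (slackPart L n).primeFactors, p ≤ L.factorial := by
  refine prod_primes_le_factorial fun p hp => ⟨Nat.prime_of_mem_primeFactors hp, ?_⟩
  rw [slackPart, primeFactors_primePart] at hp
  exact (mem_filter.1 hp).2.1

lemma card_divisors_slackPart_le (hn : n ≠ 0) (hpow : n ∈ powFree K)
    (hsq : n ∉ withLargeSquare K) (hK : 0 < K) :
    #(slackPart L n).divisors ≤ K ^ K * 2 ^ #{p ∈ n.primeFactors | K < p ∧ p ≤ L} := by
  rw [slackPart, card_divisors_primePart, ← prod_filter_mul_prod_filter_not _ (· ≤ K),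
    filter_filter, filter_filter]
  refine Nat.mul_le_mul
    ((prod_le_pow_card _ _ K fun p hp => ?_).trans (Nat.pow_le_pow_right hK ?_))
    ((prod_le_pow_card _ _ 2 fun p hp => ?_).trans (Nat.pow_le_pow_right two_pos ?_))
  · obtain ⟨hpn, -, hpK⟩ := mem_filter.1 hp
    exact (factorization_add_one_le hn hpow (Nat.prime_of_mem_primeFactors hpn) hpK).trans hpK
  · refine (card_le_card fun p hp => ?_).trans_eq (Nat.card_Icc 1 K)
    obtain ⟨hpn, -, hpK⟩ := mem_filter.1 hp
    exact mem_Icc.2 ⟨(Nat.prime_of_mem_primeFactors hpn).pos, hpK⟩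
  · obtain ⟨hpn, -, hpK⟩ := mem_filter.1 hp
    exact Nat.succ_le_succ <|
      factorization_le_one hn hsq (Nat.prime_of_mem_primeFactors hpn) (not_le.1 hpK)
  · exact card_le_card <| monotone_filter_right _ fun p _ ⟨⟨hpL, _⟩, hpK⟩ => ⟨not_le.1 hpK, hpL⟩

lemma squarefree_roughPart (hn : n ≠ 0) (hsq : n ∉ withLargeSquare K) (hKL : K ≤ L) :
    Squarefree (roughPart L n) := by
  rw [roughPart, Nat.squarefree_iff_factorization_le_one primePart_ne_zero]
  intro p
  by_cases hp : p ∈ (primePart n (L < ·)).primeFactors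
  · rw [factorization_primePart_of_mem hp]
    rw [primeFactors_primePart] at hp
    obtain ⟨hpn, hLp⟩ := mem_filter.1 hp
    exact factorization_le_one hn hsq (Nat.prime_of_mem_primeFactors hpn) (hKL.trans_lt hLp)
  · rw [Finsupp.notMem_support_iff.1 hp]
    exact zero_le_one

lemma card_filter_le_card_divisors_roughPart :
    #{p ∈ n.primeFactors | L < p} ≤ #(roughPart L n).divisors := by
  rw [← primeFactors_primePart]
  exact card_primeFactors_le_card_divisors

lemma rough_error_le (hn : n ≠ 0) (hpow : n ∈ powFree K) (hsq : n ∉ withLargeSquare K)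
    (hK : 2 ≤ K) (hweight : 2 * K * K.factorial * K ^ K * roughWeight K L n ≤ 1) :
    2 * ((∏ p ∈ criticalPrimes n, p : ℕ) : ℝ) * #(slackPart L n).divisors
      * nontrivialDivisorSum (roughPart L n) ≤ 1 / K := by
  have hQ : ((∏ p ∈ criticalPrimes n, p : ℕ) : ℝ) ≤ K.factorial :=
    Nat.cast_le.2 (prod_criticalPrimes_le hn hsq hK)
  have hu : (#(slackPart L n).divisors : ℝ)
      ≤ K ^ K * 2 ^ #{p ∈ n.primeFactors | K < p ∧ p ≤ L} := by
    exact_mod_cast card_divisors_slackPart_le hn hpow hsq (by omega)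
  have hsum : 0 ≤ nontrivialDivisorSum (roughPart L n) := sum_nonneg fun _ _ => by positivity
  have hK0 : (0 : ℝ) < K := by exact_mod_cast (by omega : 0 < K)
  rw [le_div_iff₀ hK0]
  refine le_trans ?_ hweight
  calc _ ≤ 2 * (K.factorial : ℝ) * (K ^ K * 2 ^ #{p ∈ n.primeFactors | K < p ∧ p ≤ L})
        * nontrivialDivisorSum (roughPart L n) * K := by gcongr
    _ = _ := by rw [roughWeight]; ring

lemma matchable_of_mem_powFree (hn : n ≠ 0) (hK : 3 ≤ K) (hKL : K ≤ L) (hpow : n ∈ powFree K)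
    (hsq : n ∉ withLargeSquare K)
    (hweight : 2 * K * K.factorial * K ^ K * roughWeight K L n ≤ 1)
    (hlarge : n ∉ fewLargePrimes (2 * K * L.factorial) L) : Matchable n := by
  have hK2 : 2 ≤ K := by omega
  have hK0 : (0 : ℝ) < K := by positivity
  have hC (p : ℕ) (hp : p ∈ criticalPrimes n) : p.Prime :=
    Nat.prime_of_mem_primeFactors (mem_filter.1 hp).1
  have hcop := coprime_prod_criticalPrimes hn hsq hK2 hKL
  have hQu : (∏ p ∈ criticalPrimes n, p).Coprime (slackPart L n) :=
    (hcop.coprime_dvd_right (dvd_mul_right _ _)).coprime_dvd_left <|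
      prod_dvd_prod_of_dvd _ _ fun p hp => dvd_pow_self p (Nat.sub_pos_of_lt (hC p hp).one_lt).ne'
  have hrad : 2 * ∏ p ∈ (slackPart L n).primeFactors, (p : ℝ)
      ≤ 1 / K * #(roughPart L n).divisors := by
    have hu : ((∏ p ∈ (slackPart L n).primeFactors, p : ℕ) : ℝ) ≤ L.factorial :=
      Nat.cast_le.2 prod_primeFactors_slackPart_le
    have hv : 2 * K * L.factorial ≤ #(roughPart L n).divisors :=
      (not_lt.1 hlarge).trans card_filter_le_card_divisors_roughPart
    have hv' : (2 * K * L.factorial : ℝ) ≤ #(roughPart L n).divisors := by exact_mod_cast hv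
    rw [one_div, inv_mul_eq_div, le_div_iff₀ hK0, ← Nat.cast_prod]
    nlinarith
  rw [← prod_criticalPrimes_mul hn hsq hK2 hKL]
  refine matchable_of_residue_classes hC hcop fun r =>
    exists_injOn_of_hall _ _ fun S hS => ?_
  have hnbrs : S.biUnion (fun y => {d ∈ (slackPart L n * roughPart L n).divisors | d.Coprime y})
      = coprimeDivisors (slackPart L n * roughPart L n) S := by
    ext d
    simp only [coprimeDivisors, mem_biUnion, mem_filter]
    tauto
  rw [hnbrs]
  exact card_le_card_coprimeDivisors primePart_ne_zero (squarefree_roughPart hn hsq hKL)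
    coprime_slackPart_roughPart (prod_pos fun p hp => (hC p hp).pos) hQu (by positivity)
    ((div_le_one hK0).2 (by exact_mod_cast (by omega : 1 ≤ K)))
    (fun p => factorization_slackPart_add_one_le hn hpow hsq hK)
    (rough_error_le hn hpow hsq hK2 hweight) hrad hS

end Criterion

/-! ### An obstruction to matchability -/

section Obstruction

variable {n p : ℕ}

-- The multiples of `p` in `{1, …, τ(n)}` can only be matched with divisors not divisible by `p`,
-- and there are too many of them.
lemma not_matchable_of_pow_dvd (hn : n ≠ 0) (hp : p.Prime) (hpn : p ^ p ∣ n)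
    (hcard : p ≤ #(ordCompl[p] n).divisors) : ¬ Matchable n := by
  rintro ⟨ψ, hψ, hcop⟩
  have hfac : p ≤ n.factorization p := (hp.pow_dvd_iff_le_factorization hn).1 hpn
  have hτ : #n.divisors = (n.factorization p + 1) * #(ordCompl[p] n).divisors := by
    conv_lhs => rw [← Nat.ordProj_mul_ordCompl_eq_self n p]
    rw [((Nat.coprime_ordCompl hp hn).pow_left _).card_divisors_mul, Nat.divisors_prime_pow hp,
      card_map, card_range]
  have hle : #n.divisors / p ≤ #(ordCompl[p] n).divisors := by
    rw [← Nat.Ioc_filter_dvd_card_eq_div]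
    refine card_le_card_of_surjOn ψ fun y hy => ?_
    obtain ⟨hy, hpy⟩ := mem_filter.1 (mem_coe.1 hy)
    obtain ⟨d, hd, rfl⟩ := hψ.surjOn (mem_coe.2 hy)
    have hpd : ¬ p ∣ d := fun h => hp.one_lt.ne' (Nat.dvd_one.1 (hcop d hd ▸ Nat.dvd_gcd h hpy))
    have hdn := Nat.dvd_of_mem_divisors (mem_coe.1 hd)
    rw [← Nat.ordProj_mul_ordCompl_eq_self n p] at hdn
    refine ⟨d, mem_coe.2 (Nat.mem_divisors.2 ⟨?_, (Nat.ordCompl_pos p hn).ne'⟩), rfl⟩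
    exact ((hp.coprime_iff_not_dvd.2 hpd).symm.pow_right _).dvd_of_dvd_mul_left hdn
  have hlt : #(ordCompl[p] n).divisors + 1 ≤ #n.divisors / p := by
    rw [Nat.le_div_iff_mul_le hp.pos, hτ]
    nlinarith
  omega

lemma filter_primeFactors_subset_ordCompl {L : ℕ} (hpL : p ≤ L) :
    {q ∈ n.primeFactors | L < q} ⊆ (ordCompl[p] n).primeFactors := by
  intro q hq
  obtain ⟨hqn, hLq⟩ := mem_filter.1 hq
  rw [← Nat.support_factorization, Nat.factorization_ordCompl, Finsupp.support_erase]
  exact mem_erase.2 ⟨(hpL.trans_lt hLq).ne', hqn⟩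

lemma not_matchable_of_notMem_powFree {K L M : ℕ} (hn : n ≠ 0) (hKL : K ≤ L) (hKM : K ≤ M)
    (hpow : n ∉ powFree K) (hlarge : n ∉ fewLargePrimes M L) : ¬ Matchable n := by
  obtain ⟨p, hpK, hp, hpn⟩ : ∃ p ≤ K, p.Prime ∧ p ^ p ∣ n := by
    simpa only [powFree, Set.mem_ofPred_eq, not_forall, not_not, exists_prop] using hpow
  refine not_matchable_of_pow_dvd hn hp hpn ?_
  calc p ≤ M := hpK.trans hKM
    _ ≤ #{q ∈ n.primeFactors | L < q} := not_lt.1 hlarge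
    _ ≤ #(ordCompl[p] n).primeFactors :=
      card_le_card (filter_primeFactors_subset_ordCompl (hpK.trans hKL))
    _ ≤ #(ordCompl[p] n).divisors := card_primeFactors_le_card_divisors

end Obstruction

/-! ### Natural density -/

section Density

open Classical in
/-- The number of positive elements of `S` up to `x`. -/
noncomputable def countUpTo (S : Set ℕ) (x : ℕ) : ℕ :=
  #{n ∈ Ioc 0 x | n ∈ S}

/-- `S` has asymptotic density `d`. -/
def HasDensity (S : Set ℕ) (d : ℝ) : Prop :=
  Tendsto (fun x : ℕ => (countUpTo S x : ℝ) / x) atTop (𝓝 d)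

/-- Up to every large enough `x`, the set `S` has at most `δ * x` elements. In particular its upper
density is at most `δ`. -/
def EventuallyCountLE (S : Set ℕ) (δ : ℝ) : Prop :=
  ∀ᶠ x : ℕ in atTop, (countUpTo S x : ℝ) ≤ δ * x

variable {S T : Set ℕ} {d e δ : ℝ}

lemma countUpTo_mono (h : ∀ n ≠ 0, n ∈ S → n ∈ T) (x : ℕ) : countUpTo S x ≤ countUpTo T x := by
  classical
  refine card_le_card fun n hn => ?_
  obtain ⟨hx, hS⟩ := mem_filter.1 hn
  exact mem_filter.2 ⟨hx, h n (mem_Ioc.1 hx).1.ne' hS⟩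

lemma countUpTo_union_le (x : ℕ) : countUpTo (S ∪ T) x ≤ countUpTo S x + countUpTo T x := by
  classical
  refine (card_le_card fun n hn => ?_).trans (card_union_le _ _)
  simpa only [mem_union, mem_filter, Set.mem_union, and_or_left] using hn

lemma countUpTo_diff_add (h : T ⊆ S) (x : ℕ) :
    countUpTo (S \ T) x + countUpTo T x = countUpTo S x := by
  classical
  unfold countUpTo
  rw [add_comm, ← card_filter_add_card_filter_not (s := {n ∈ Ioc 0 x | n ∈ S}) (· ∈ T),
    filter_filter, filter_filter]
  congr! 3 with n
  exact ⟨fun hn => ⟨h hn, hn⟩, And.right⟩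

lemma countUpTo_image_mul {m : ℕ} (hm : 0 < m) (x : ℕ) :
    countUpTo ((m * ·) '' S) x = countUpTo S (x / m) := by
  classical
  unfold countUpTo
  rw [← card_image_of_injective {k ∈ Ioc 0 (x / m) | k ∈ S} (mul_right_injective₀ hm.ne')]
  congr 1
  ext n
  simp only [mem_filter, mem_Ioc, mem_image, Set.mem_image, Nat.le_div_iff_mul_le hm]
  constructor
  · rintro ⟨⟨hn0, hnx⟩, k, hk, rfl⟩
    exact ⟨k, ⟨⟨Nat.pos_of_mul_pos_left hn0, by rwa [mul_comm]⟩, hk⟩, rfl⟩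
  · rintro ⟨k, ⟨⟨hk0, hkx⟩, hk⟩, rfl⟩
    exact ⟨⟨Nat.mul_pos hm hk0, by rwa [mul_comm]⟩, k, hk, rfl⟩

lemma HasDensity.diff (hS : HasDensity S d) (hT : HasDensity T e) (h : T ⊆ S) :
    HasDensity (S \ T) (d - e) := by
  refine (hS.sub hT).congr fun x => ?_
  rw [← countUpTo_diff_add h x, Nat.cast_add]
  ring

lemma HasDensity.image_mul (hS : HasDensity S d) {m : ℕ} (hm : 0 < m) :
    HasDensity ((m * ·) '' S) (d * (1 / m)) := by
  have hfloor : Tendsto (fun x : ℕ => ((x / m : ℕ) : ℝ) / x) atTop (𝓝 (1 / m)) := by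
    refine ((tendsto_nat_floor_mul_div_atTop (by positivity : (0 : ℝ) ≤ 1 / m)).comp
      tendsto_natCast_atTop_atTop).congr fun x => ?_
    rw [Function.comp_apply, one_div_mul_eq_div, Nat.floor_div_eq_div]
  refine ((hS.comp (Nat.tendsto_div_const_atTop hm.ne')).mul hfloor).congr' ?_
  filter_upwards [eventually_ge_atTop m] with x hx
  have : ((x / m : ℕ) : ℝ) ≠ 0 := Nat.cast_ne_zero.2 (Nat.div_pos hx hm).ne'
  rw [countUpTo_image_mul hm, Function.comp_apply]
  field_simp

lemma HasDensity.eventuallyCountLE (hS : HasDensity S d) (hd : d < δ) : EventuallyCountLE S δ := by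
  filter_upwards [hS.eventually_lt_const hd, eventually_gt_atTop 0] with x hx hx0
  exact ((div_lt_iff₀ (Nat.cast_pos.2 hx0)).1 hx).le

lemma EventuallyCountLE.mono (hT : EventuallyCountLE T δ) (h : ∀ n ≠ 0, n ∈ S → n ∈ T) :
    EventuallyCountLE S δ :=
  Eventually.mono hT fun x hx => (Nat.cast_le.2 (countUpTo_mono h x)).trans hx

lemma EventuallyCountLE.mono_right (hS : EventuallyCountLE S δ) {δ' : ℝ} (h : δ ≤ δ') :
    EventuallyCountLE S δ' :=
  Eventually.mono hS fun x hx => hx.trans (mul_le_mul_of_nonneg_right h x.cast_nonneg)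

lemma EventuallyCountLE.union (hS : EventuallyCountLE S δ) {δ' : ℝ}
    (hT : EventuallyCountLE T δ') : EventuallyCountLE (S ∪ T) (δ + δ') := by
  filter_upwards [hS, hT] with x hSx hTx
  rw [add_mul]
  refine le_trans ?_ (add_le_add hSx hTx)
  exact_mod_cast countUpTo_union_le x

lemma abs_countUpTo_sub_le (x : ℕ) :
    |(countUpTo S x : ℝ) - countUpTo T x| ≤ countUpTo (symmDiff S T) x := by
  have hST : countUpTo S x ≤ countUpTo T x + countUpTo (symmDiff S T) x :=
    (countUpTo_mono (fun n _ hn => by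
      rw [Set.mem_union, Set.mem_symmDiff]; tauto) x).trans (countUpTo_union_le x)
  have hTS : countUpTo T x ≤ countUpTo S x + countUpTo (symmDiff S T) x :=
    (countUpTo_mono (fun n _ hn => by
      rw [Set.mem_union, Set.mem_symmDiff]; tauto) x).trans (countUpTo_union_le x)
  rify at hST hTS
  rw [abs_sub_le_iff]
  constructor <;> linarith

lemma hasDensity_of_approx {A : ℕ → Set ℕ} {a : ℕ → ℝ} (hA : ∀ K, HasDensity (A K) (a K))
    (ha : Tendsto a atTop (𝓝 d))
    (hSA : ∀ ε > 0, ∀ᶠ K in atTop, EventuallyCountLE (symmDiff S (A K)) ε) : HasDensity S d := by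
  refine Metric.tendsto_nhds.2 fun ε hε => ?_
  have hε3 : 0 < ε / 3 := by positivity
  obtain ⟨K, haK, hSK⟩ := ((Metric.tendsto_nhds.1 ha _ hε3).and (hSA _ hε3)).exists
  filter_upwards [hSK, Metric.tendsto_nhds.1 (hA K) _ hε3, eventually_gt_atTop 0] with x hS hAx hx
  have hSx : dist ((countUpTo S x : ℝ) / x) (countUpTo (A K) x / x) ≤ ε / 3 := by
    rw [Real.dist_eq, ← sub_div, abs_div, Nat.abs_cast, div_le_iff₀ (Nat.cast_pos.2 hx)]
    exact (abs_countUpTo_sub_le x).trans hS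
  linarith [dist_triangle4 ((countUpTo S x : ℝ) / x) (countUpTo (A K) x / x) (a K) d]

lemma countUpTo_one_lt_le {f : ℕ → ℝ} (hf : ∀ n, 0 ≤ f n) (x : ℕ) :
    (countUpTo {n | 1 < f n} x : ℝ) ≤ ∑ n ∈ Ioc 0 x, f n := by
  classical
  calc (countUpTo {n | 1 < f n} x : ℝ) = ∑ n ∈ Ioc 0 x with 1 < f n, 1 := by
        rw [sum_const, nsmul_one]; rfl
    _ ≤ ∑ n ∈ Ioc 0 x with 1 < f n, f n := sum_le_sum fun n hn => (mem_filter.1 hn).2.le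
    _ ≤ ∑ n ∈ Ioc 0 x, f n :=
      sum_le_sum_of_subset_of_nonneg (filter_subset _ _) fun n _ _ => hf n

lemma hasDensity_univ : HasDensity Set.univ 1 := by
  refine tendsto_const_nhds.congr' ?_
  filter_upwards [eventually_gt_atTop 0] with x hx
  have : (x : ℝ) ≠ 0 := Nat.cast_ne_zero.2 hx.ne'
  simp [countUpTo, this]

-- Removing the multiples of one more modulus `m` from `S` removes exactly `m • S`.
lemma hasDensity_forall_not_dvd {ι : Type*} {I : Finset ι} {m : ι → ℕ} (hm : ∀ i ∈ I, 0 < m i)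
    (hcop : (I : Set ι).Pairwise (Function.onFun Nat.Coprime m)) :
    HasDensity {n | ∀ i ∈ I, ¬ m i ∣ n} (∏ i ∈ I, (1 - 1 / (m i : ℝ))) := by
  classical
  induction I using Finset.induction_on with
  | empty => simpa using! hasDensity_univ
  | insert j I hj ih =>
    rw [forall_mem_insert] at hm
    rw [coe_insert, Set.pairwise_insert_of_symm_of_notMem (mem_coe.not.2 hj)] at hcop
    set A : Set ℕ := {n | ∀ i ∈ I, ¬ m i ∣ n}
    have hA := ih hm.2 hcop.1
    have hsub : (m j * ·) '' A ⊆ A := by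
      rintro _ ⟨n, hn, rfl⟩ i hi hdvd
      exact hn i hi ((hcop.2 i hi).symm.dvd_of_dvd_mul_left hdvd)
    have hdiff : {n | ∀ i ∈ insert j I, ¬ m i ∣ n} = A \ (m j * ·) '' A := by
      ext n
      simp only [forall_mem_insert, Set.mem_ofPred_eq, Set.mem_sdiff, A, Set.mem_image, not_exists,
        not_and, and_comm (a := ¬ m j ∣ n)]
      refine and_congr_right fun hn => ⟨?_, ?_⟩
      · rintro hjn k - rfl
        exact hjn (dvd_mul_right _ _)
      · rintro h ⟨k, rfl⟩
        exact h k (fun i hi hdvd => hn i hi (hdvd.mul_left _)) rfl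
    rw [hdiff, prod_insert hj, sub_mul, one_mul, mul_comm (1 / (m j : ℝ))]
    exact hA.diff (hA.image_mul hm.1) hsub

end Density

/-! ### The density of the exceptional sets -/

section Exceptional

variable {K L n : ℕ} {δ : ℝ}

lemma hasDensity_powFree (K : ℕ) :
    HasDensity (powFree K) (∏ p ∈ range (K + 1) with p.Prime, (1 - 1 / (p : ℝ) ^ p)) := by
  have hprime : ∀ p ∈ {p ∈ range (K + 1) | p.Prime}, p.Prime := fun p hp => (mem_filter.1 hp).2
  have hset : powFree K = {n | ∀ p ∈ {p ∈ range (K + 1) | p.Prime}, ¬ p ^ p ∣ n} := by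
    ext n
    simp only [powFree, Set.mem_ofPred_eq, mem_filter, mem_range, Nat.lt_succ_iff, and_imp]
  have h := hasDensity_forall_not_dvd (m := fun p => p ^ p) (I := {p ∈ range (K + 1) | p.Prime})
    (fun p hp => pow_pos (hprime p hp).pos p)
    (fun p hp q hq hpq => Nat.Coprime.pow _ _ <|
      (Nat.coprime_primes (hprime p hp) (hprime q hq)).2 hpq)
  simpa only [hset, Nat.cast_pow] using h

lemma tendsto_prod_alphaConst :
    Tendsto (fun K : ℕ => ∏ p ∈ range (K + 1) with p.Prime, (1 - 1 / (p : ℝ) ^ p))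
      atTop (𝓝 alphaConst) := by
  have hsum : Summable fun p : Nat.Primes => -(1 / ((p : ℕ) : ℝ) ^ (p : ℕ)) := by
    refine Summable.neg (Summable.of_nonneg_of_le (fun _ => by positivity) (fun p => ?_)
      ((Real.summable_one_div_nat_pow.2 one_lt_two).comp_injective
        (Subtype.val_injective (p := Nat.Prime))))
    have hp : (1 : ℝ) ≤ ((p : ℕ) : ℝ) := by exact_mod_cast p.2.one_le
    exact one_div_le_one_div_of_le (by positivity) (pow_le_pow_right₀ hp p.2.two_le)
  have hprod : HasProd (fun p : Nat.Primes => 1 - 1 / ((p : ℕ) : ℝ) ^ (p : ℕ)) alphaConst := by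
    simpa only [← sub_eq_add_neg] using! (Real.multipliable_one_add_of_summable hsum).hasProd
  have hexhaust :
      Tendsto (fun K : ℕ => ((range (K + 1)).subtype Nat.Prime : Finset Nat.Primes)) atTop atTop :=
    tendsto_atTop_finset_of_monotone
      (fun _ _ hKL => subtype_mono (range_mono (Nat.succ_le_succ hKL)))
      fun p => ⟨p, mem_subtype.2 (mem_range.2 (Nat.lt_succ_self _))⟩
  exact (hprod.comp hexhaust).congr fun K =>
    prod_subtype_eq_prod_filter (s := range (K + 1)) fun p : ℕ => 1 - 1 / (p : ℝ) ^ p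

lemma sum_Ioc_inv_sq_le (hK : K ≠ 0) (x : ℕ) : ∑ i ∈ Ioc K (x + K), ((i : ℝ) ^ 2)⁻¹ ≤ 1 / K := by
  rw [one_div]
  exact (sum_Ioc_inv_sq_le_sub hK (Nat.le_add_left K x)).trans (sub_le_self _ (by positivity))

lemma eventuallyCountLE_withLargeSquare (hK : K ≠ 0) :
    EventuallyCountLE (withLargeSquare K) (1 / K) := by
  classical
  refine .of_forall fun x => ?_
  have hcover : countUpTo (withLargeSquare K) x
      ≤ ∑ p ∈ Ioc K (x + K), #{n ∈ Ioc 0 x | p ^ 2 ∣ n} := by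
    refine (card_le_card fun n hn => ?_).trans card_biUnion_le
    obtain ⟨hnx, p, -, hKp, hpn⟩ := mem_filter.1 hn
    have hpx : p ≤ x := (Nat.le_self_pow two_ne_zero p).trans <|
      (Nat.le_of_dvd (mem_Ioc.1 hnx).1 hpn).trans (mem_Ioc.1 hnx).2
    exact mem_biUnion.2 ⟨p, mem_Ioc.2 ⟨hKp, hpx.trans (Nat.le_add_right x K)⟩,
      mem_filter.2 ⟨hnx, hpn⟩⟩
  calc (countUpTo (withLargeSquare K) x : ℝ)
      ≤ ∑ p ∈ Ioc K (x + K), (#{n ∈ Ioc 0 x | p ^ 2 ∣ n} : ℝ) := by exact_mod_cast hcover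
    _ ≤ ∑ p ∈ Ioc K (x + K), x * ((p : ℝ) ^ 2)⁻¹ :=
        sum_le_sum fun p _ => (card_dvd_le x (p ^ 2)).trans_eq (by rw [Nat.cast_pow, one_div])
    _ ≤ 1 / K * x := by
        rw [← mul_sum, mul_comm]
        exact mul_le_mul_of_nonneg_right (sum_Ioc_inv_sq_le hK x) x.cast_nonneg

lemma prod_odd_sq_le (N : ℕ) : (∏ j ∈ range N, (1 + 1 / (2 * (j : ℝ) + 3))) ^ 2 ≤ N + 1 := by
  induction N with
  | zero => simp
  | succ N ih =>
    have hstep : (N + 1) * (1 + 1 / (2 * (N : ℝ) + 3)) ^ 2 ≤ N + 1 + 1 := by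
      rw [one_add_div (by positivity), div_pow, mul_div_assoc', div_le_iff₀ (by positivity)]
      nlinarith [N.cast_nonneg (α := ℝ)]
    rw [prod_range_succ, mul_pow, Nat.cast_succ]
    exact (mul_le_mul_of_nonneg_right ih (by positivity)).trans hstep

lemma prod_primes_one_add_le_sqrt (hK : 2 ≤ K) (N : ℕ) :
    ∏ p ∈ Ioc K (2 * N + 1) with p.Prime, (1 + 1 / (p : ℝ)) ≤ √(N + 1) := by
  have hsubset : {p ∈ Ioc K (2 * N + 1) | p.Prime} ⊆ (range N).image fun j => 2 * j + 3 := by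
    intro p hp
    obtain ⟨hpKN, hprime⟩ := mem_filter.1 hp
    obtain ⟨hKp, hpN⟩ := mem_Ioc.1 hpKN
    have hodd : p % 2 = 1 := hprime.eq_two_or_odd.resolve_left (by omega)
    exact mem_image.2 ⟨(p - 3) / 2, mem_range.2 (by omega), by omega⟩
  calc ∏ p ∈ Ioc K (2 * N + 1) with p.Prime, (1 + 1 / (p : ℝ))
      ≤ ∏ m ∈ (range N).image fun j => 2 * j + 3, (1 + 1 / ((m : ℕ) : ℝ)) :=
        prod_le_prod_of_subset_of_one_le hsubset (fun _ _ => by positivity)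
          fun m _ _ => le_add_of_nonneg_right (by positivity)
    _ = ∏ j ∈ range N, (1 + 1 / (2 * (j : ℝ) + 3)) := by
        rw [prod_image fun a _ b _ (hab : 2 * a + 3 = 2 * b + 3) => by omega]
        push_cast
        rfl
    _ ≤ √(N + 1) := Real.le_sqrt_of_sq_le (prod_odd_sq_le N)

lemma tendsto_prod_primes_one_add_div (hK : 2 ≤ K) :
    Tendsto (fun N : ℕ => (∏ p ∈ Ioc K (2 * N + 1) with p.Prime, (1 + 1 / (p : ℝ)))
      * (1 / ((2 * N + 1 : ℕ) : ℝ))) atTop (𝓝 0) := by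
  have hsqrt : Tendsto (fun N : ℕ => (√((N : ℝ) + 1))⁻¹) atTop (𝓝 0) :=
    (Real.tendsto_sqrt_atTop.comp
      (tendsto_atTop_add_const_right _ _ tendsto_natCast_atTop_atTop)).inv_tendsto_atTop
  refine squeeze_zero (fun N => mul_nonneg (prod_nonneg fun _ _ => by positivity) (by positivity))
    (fun N => ?_) hsqrt
  calc _ ≤ √((N : ℝ) + 1) * (1 / ((2 * N + 1 : ℕ) : ℝ)) :=
        mul_le_mul_of_nonneg_right (prod_primes_one_add_le_sqrt hK N) (by positivity)
    _ ≤ (√((N : ℝ) + 1))⁻¹ := by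
        rw [mul_one_div, div_le_iff₀ (by positivity), inv_mul_eq_div, le_div_iff₀ (by positivity),
          Real.mul_self_sqrt (by positivity)]
        push_cast
        linarith [N.cast_nonneg (α := ℝ)]

lemma roughPart_dvd (hn : n ≠ 0) : roughPart L n ∣ n :=
  (prod_dvd_prod_of_subset _ _ _ (filter_subset _ _)).trans
    (Nat.prod_factorization_pow_eq_self hn).dvd

lemma lt_of_prime_of_dvd_roughPart {p : ℕ} (hp : p.Prime) (h : p ∣ roughPart L n) : L < p := by
  have hmem : p ∈ (roughPart L n).primeFactors := Nat.mem_primeFactors.2 ⟨hp, h, primePart_ne_zero⟩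
  rw [roughPart, primeFactors_primePart] at hmem
  exact (mem_filter.1 hmem).2

lemma lt_of_dvd_roughPart {t : ℕ} (ht : t ≠ 1) (h : t ∣ roughPart L n) : L < t :=
  (lt_of_prime_of_dvd_roughPart (Nat.minFac_prime ht) ((Nat.minFac_dvd t).trans h)).trans_le
    (Nat.minFac_le (Nat.pos_of_dvd_of_pos h (Nat.pos_of_ne_zero primePart_ne_zero)))

-- The power of `2` counts the sets `T` of primes in `(K, L]` dividing `n`, and `∏ T` is coprime to
-- every divisor `t` of the rough part, so that the pair `(T, t)` contributes via `∏ T * t ∣ n`.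
lemma roughWeight_le_sum {x : ℕ} (hn : n ∈ Ioc 0 x) :
    roughWeight K L n ≤ ∑ z ∈ {p ∈ Ioc K L | p.Prime}.powerset ×ˢ Ioc L (x + L),
      if (∏ p ∈ z.1, p) * z.2 ∣ n then 1 / (z.2 : ℝ) else 0 := by
  obtain ⟨hn0, hnx⟩ := mem_Ioc.1 hn
  set F := {p ∈ n.primeFactors | K < p ∧ p ≤ L}
  have hexpand : roughWeight K L n
      = ∑ z ∈ F.powerset ×ˢ (roughPart L n).divisors.erase 1, 1 / (z.2 : ℝ) := by
    simp only [sum_product, sum_const, card_powerset, nsmul_eq_mul, Nat.cast_pow, Nat.cast_two]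
    rfl
  rw [hexpand, ← sum_filter]
  refine sum_le_sum_of_subset_of_nonneg ?_ fun _ _ _ => by positivity
  rintro ⟨T, t⟩ hz
  obtain ⟨hT, ht1, ht⟩ : T ⊆ F ∧ t ≠ 1 ∧ t ∈ (roughPart L n).divisors := by
    simpa only [mem_product, mem_powerset, mem_erase] using hz
  have htv := Nat.dvd_of_mem_divisors ht
  have htn : t ∣ n := htv.trans (roughPart_dvd hn0.ne')
  have hTn : ∏ p ∈ T, p ∣ n :=
    (prod_dvd_prod_of_subset _ _ _ fun p hp => (mem_filter.1 (hT hp)).1).trans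
      (Nat.prod_primeFactors_dvd n)
  have hTprime {p : ℕ} (hp : p ∈ T) : p.Prime ∧ K < p ∧ p ≤ L :=
    (mem_filter.1 (hT hp)).imp_left Nat.prime_of_mem_primeFactors
  have hcop : (∏ p ∈ T, p).Coprime t := Nat.Coprime.prod_left fun p hp =>
    (hTprime hp).1.coprime_iff_not_dvd.2 fun hpt =>
      ((hTprime hp).2.2.trans_lt
        (lt_of_prime_of_dvd_roughPart (hTprime hp).1 (hpt.trans htv))).false
  refine mem_filter.2 ⟨mem_product.2 ⟨mem_powerset.2 fun p hp => ?_, mem_Ioc.2 ⟨?_, ?_⟩⟩,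
    hcop.mul_dvd_of_dvd_of_dvd hTn htn⟩
  · exact mem_filter.2 ⟨mem_Ioc.2 (hTprime hp).2, (hTprime hp).1⟩
  · exact lt_of_dvd_roughPart ht1 htv
  · exact (Nat.le_of_dvd hn0 htn).trans (hnx.trans (Nat.le_add_right x L))

lemma sum_roughWeight_le (hL : L ≠ 0) (x : ℕ) :
    ∑ n ∈ Ioc 0 x, roughWeight K L n
      ≤ x * ((∏ p ∈ Ioc K L with p.Prime, (1 + 1 / (p : ℝ))) * (1 / L)) := by
  set R := {p ∈ Ioc K L | p.Prime}
  have hcount (z : Finset ℕ × ℕ) :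
      ∑ n ∈ Ioc 0 x, (if (∏ p ∈ z.1, p) * z.2 ∣ n then 1 / (z.2 : ℝ) else 0)
        ≤ x * ((∏ p ∈ z.1, 1 / (p : ℝ)) * ((z.2 : ℝ) ^ 2)⁻¹) := by
    rw [← sum_filter, sum_const, nsmul_eq_mul]
    refine (mul_le_mul_of_nonneg_right (card_dvd_le x _) (by positivity)).trans_eq ?_
    rw [prod_div_distrib, prod_const_one]
    push_cast
    ring
  calc ∑ n ∈ Ioc 0 x, roughWeight K L n
      ≤ ∑ n ∈ Ioc 0 x, ∑ z ∈ R.powerset ×ˢ Ioc L (x + L),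
          if (∏ p ∈ z.1, p) * z.2 ∣ n then 1 / (z.2 : ℝ) else 0 :=
        sum_le_sum fun _ hn => roughWeight_le_sum hn
    _ ≤ ∑ z ∈ R.powerset ×ˢ Ioc L (x + L),
          x * ((∏ p ∈ z.1, 1 / (p : ℝ)) * ((z.2 : ℝ) ^ 2)⁻¹) := by
        rw [sum_comm]
        exact sum_le_sum fun z _ => hcount z
    _ = x * ((∏ p ∈ R, (1 + 1 / (p : ℝ))) * ∑ t ∈ Ioc L (x + L), ((t : ℝ) ^ 2)⁻¹) := by
        rw [← mul_sum, sum_product, prod_one_add, sum_mul_sum]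
    _ ≤ x * ((∏ p ∈ R, (1 + 1 / (p : ℝ))) * (1 / L)) := by
        gcongr
        exact sum_Ioc_inv_sq_le hL x

lemma roughWeight_nonneg : 0 ≤ roughWeight K L n :=
  mul_nonneg (by positivity) (sum_nonneg fun _ _ => by positivity)

lemma exists_eventuallyCountLE_roughWeight (hK : 2 ≤ K) {c : ℝ} (hc : 0 ≤ c) (hδ : 0 < δ) :
    ∃ L ≥ K, EventuallyCountLE {n | 1 < c * roughWeight K L n} δ := by
  have hlim := (tendsto_prod_primes_one_add_div hK).const_mul c
  rw [mul_zero] at hlim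
  obtain ⟨N, hN, hKN⟩ := ((hlim.eventually_le_const hδ).and (eventually_ge_atTop K)).exists
  refine ⟨2 * N + 1, by omega, .of_forall fun x => ?_⟩
  calc (countUpTo {n | 1 < c * roughWeight K (2 * N + 1) n} x : ℝ)
      ≤ ∑ n ∈ Ioc 0 x, c * roughWeight K (2 * N + 1) n :=
        countUpTo_one_lt_le (fun _ => mul_nonneg hc roughWeight_nonneg) x
    _ ≤ c * (x * ((∏ p ∈ Ioc K (2 * N + 1) with p.Prime, (1 + 1 / (p : ℝ)))
          * (1 / ((2 * N + 1 : ℕ) : ℝ)))) := by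
        rw [← mul_sum]
        exact mul_le_mul_of_nonneg_left (sum_roughWeight_le (by omega) x) hc
    _ ≤ δ * x := by
        rw [mul_left_comm, mul_comm]
        exact mul_le_mul_of_nonneg_right hN x.cast_nonneg

-- This is the divergence of `∑ 1 / p`.
lemma exists_primes_prod_lt (L : ℕ) (hδ : 0 < δ) :
    ∃ B : Finset ℕ, (∀ p ∈ B, p.Prime ∧ L < p) ∧ ∏ p ∈ B, (1 - 1 / (p : ℝ)) < δ := by
  set f : ℕ → ℝ := Set.indicator {p | p.Prime} fun n : ℕ => 1 / (n : ℝ)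
  have hdiv : Tendsto (fun Y => ∑ i ∈ range Y, f i) atTop atTop :=
    (not_summable_iff_tendsto_nat_atTop_of_nonneg
      (Set.indicator_nonneg fun _ _ => by positivity)).1 not_summable_one_div_on_primes
  obtain ⟨Y, hLY, hY⟩ := ((eventually_ge_atTop (L + 1)).and
    (hdiv.eventually_gt_atTop (∑ i ∈ range (L + 1), f i - Real.log δ))).exists
  refine ⟨{p ∈ Ico (L + 1) Y | p.Prime}, fun p hp => ?_, ?_⟩
  · exact ⟨(mem_filter.1 hp).2, (mem_Ico.1 (mem_filter.1 hp).1).1⟩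
  have hsum : ∑ p ∈ Ico (L + 1) Y with p.Prime, 1 / (p : ℝ) = ∑ p ∈ Ico (L + 1) Y, f p := by
    simp only [sum_filter, f, Set.indicator_apply, Set.mem_ofPred_eq]
  calc ∏ p ∈ Ico (L + 1) Y with p.Prime, (1 - 1 / (p : ℝ))
      ≤ ∏ p ∈ Ico (L + 1) Y with p.Prime, Real.exp (-(1 / (p : ℝ))) := by
        refine prod_le_prod (fun p hp => ?_) fun p _ => Real.one_sub_le_exp_neg _
        have hp1 : (1 : ℝ) ≤ p := by exact_mod_cast (mem_filter.1 hp).2.one_le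
        exact sub_nonneg.2 ((div_le_one (by positivity)).2 hp1)
    _ = Real.exp (-∑ p ∈ Ico (L + 1) Y, f p) := by rw [← Real.exp_sum, sum_neg_distrib, hsum]
    _ < δ := by
        rw [← Real.lt_log_iff_exp_lt hδ, sum_Ico_eq_sub _ hLY]
        linarith

-- If some `p ∈ B` divides `n`, then `L < p ≤ L'`, so at least one prime factor is lost in passing
-- from `L` to `L'`.
lemma mem_fewLargePrimes_or_forall_not_dvd {M L' : ℕ} {B : Finset ℕ} (hn : n ≠ 0)
    (hB : ∀ p ∈ B, p.Prime ∧ L < p) (hLL' : L ≤ L') (hBL' : ∀ p ∈ B, p ≤ L')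
    (hfew : n ∈ fewLargePrimes (M + 1) L) :
    n ∈ {n | ∀ p ∈ B, ¬ p ∣ n} ∪ fewLargePrimes M L' := by
  refine or_iff_not_imp_left.2 fun hdvd => ?_
  obtain ⟨p, hp, hpn⟩ : ∃ p ∈ B, p ∣ n := by simpa using hdvd
  have hlt : #{q ∈ n.primeFactors | L' < q} < #{q ∈ n.primeFactors | L < q} := by
    refine card_lt_card ((ssubset_iff_of_subset ?_).2 ⟨p, ?_, ?_⟩)
    · exact monotone_filter_right _ fun q _ hq => hLL'.trans_lt hq
    · exact mem_filter.2 ⟨Nat.mem_primeFactors.2 ⟨(hB p hp).1, hpn, hn⟩, (hB p hp).2⟩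
    · exact fun h => (hBL' p hp).not_gt (mem_filter.1 h).2
  exact hlt.trans_le (Nat.lt_succ_iff.1 hfew)

lemma eventuallyCountLE_fewLargePrimes (M L : ℕ) (hδ : 0 < δ) :
    EventuallyCountLE (fewLargePrimes M L) δ := by
  induction M generalizing L δ with
  | zero => exact .of_forall fun x => by simpa [countUpTo, fewLargePrimes] using by positivity
  | succ M ih =>
    obtain ⟨B, hB, hprod⟩ := exists_primes_prod_lt L (half_pos hδ)
    have hsieve : HasDensity {n | ∀ p ∈ B, ¬ p ∣ n} (∏ p ∈ B, (1 - 1 / (p : ℝ))) :=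
      hasDensity_forall_not_dvd (m := id) (fun p hp => (hB p hp).1.pos) fun p hp q hq hpq =>
        (Nat.coprime_primes (hB p hp).1 (hB q hq).1).2 hpq
    rw [← add_halves δ]
    exact ((hsieve.eventuallyCountLE hprod).union (ih (max L (B.sup id)) (half_pos hδ))).mono
      fun n hn => mem_fewLargePrimes_or_forall_not_dvd hn hB (le_max_left _ _)
        fun p hp => (le_sup (f := id) hp).trans (le_max_right _ _)

end Exceptional

/-! ### The density of the matchable integers -/

section Matchable

variable {ε : ℝ}

lemma eventually_eventuallyCountLE_symmDiff_powFree (hε : 0 < ε) :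
    ∀ᶠ K in atTop, EventuallyCountLE (symmDiff {n | Matchable n} (powFree K)) ε := by
  have hε3 : 0 < ε / 3 := by positivity
  filter_upwards [eventually_ge_atTop 3,
    tendsto_one_div_atTop_nhds_zero_nat.eventually_le_const hε3] with K hK hKε
  obtain ⟨L, hKL, hweight⟩ := exists_eventuallyCountLE_roughWeight (K := K) (by omega)
    (c := 2 * K * K.factorial * K ^ K) (by positivity) hε3
  have hsquare := (eventuallyCountLE_withLargeSquare (K := K) (by omega)).mono_right hKε
  have hfew := eventuallyCountLE_fewLargePrimes (2 * K * L.factorial) L hε3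
  rw [← add_thirds ε]
  refine ((hsquare.union hweight).union hfew).mono fun n hn hsymm => ?_
  by_contra hgood
  simp only [Set.mem_union, Set.mem_ofPred_eq, not_or, not_lt] at hgood
  obtain ⟨⟨hsq, hw⟩, hlarge⟩ := hgood
  rcases Set.mem_symmDiff.1 hsymm with ⟨hmatch, hpow⟩ | ⟨hpow, hmatch⟩
  · have hKM : K ≤ 2 * K * L.factorial :=
      (Nat.le_mul_of_pos_left K two_pos).trans (Nat.le_mul_of_pos_right _ L.factorial_pos)
    exact not_matchable_of_notMem_powFree hn hKL hKM hpow hlarge hmatch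
  · exact hmatch (matchable_of_mem_powFree hn hK hKL hpow hsq hw hlarge)

lemma hasDensity_matchable : HasDensity {n | Matchable n} alphaConst :=
  hasDensity_of_approx hasDensity_powFree tendsto_prod_alphaConst fun _ hε =>
    eventually_eventuallyCountLE_symmDiff_powFree hε

end Matchable

end MatchableDensity

open Classical in
theorem stmt_13 :
    Filter.Tendsto
      (fun x : ℕ =>
        (((Finset.Icc 1 x).filter (fun n => Matchable n)).card : ℝ) / (x : ℝ))
      Filter.atTop (nhds alphaConst) := by
  exact MatchableDensity.hasDensity_matchable
end

section
/- The set of M-numbers has asymptotic density α, i.e., #{n ≤ x : n is an M-number}/x → α as x → ∞, where α = ∏_p (1 − p^{−p}) over all primes p. -/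
/-- An M-number is a positive integer not divisible by `p^p` for any prime `p`. -/
def IsMNumber (n : ℕ) : Prop := ∀ p : ℕ, p.Prime → ¬ p ^ p ∣ n

/-!
Let `m` be a family of pairwise coprime moduli with `∑ 1 / m i < ∞`. Sifting by one more modulus
`m q` removes from the sifted set `A` exactly `m q • A`, by coprimality, and so multiplies its
density by `1 - 1 / m q`; hence sifting by finitely many `m i`, `i ∈ s`, leaves density
`∏ i ∈ s, (1 - 1 / m i)`. Sifting by all the other moduli as well changes the proportion of
survivors among `1, …, x` by at most `∑ i ∉ s, 1 / m i`. This tends to `0` uniformly in `x` as `s`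
grows, so the limits in `x` and in `s` may be interchanged. For M-numbers the moduli are `p ^ p`.
-/

open Filter Finset Topology

section Density

variable {A B : Set ℕ} {a b : ℝ}

open Classical in
/-- The proportion of elements of `A` among `1, …, x`, with the junk value `0` at `x = 0`. -/
noncomputable def partialDensity (A : Set ℕ) (x : ℕ) : ℝ :=
  (#{n ∈ Icc 1 x | n ∈ A} : ℝ) / x

/-- The set `A` has asymptotic density `a`. -/
def HasDensity (A : Set ℕ) (a : ℝ) : Prop :=
  Tendsto (partialDensity A) atTop (𝓝 a)

lemma partialDensity_nonneg (A : Set ℕ) (x : ℕ) : 0 ≤ partialDensity A x := by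
  unfold partialDensity
  positivity

lemma partialDensity_mono (h : A ⊆ B) (x : ℕ) : partialDensity A x ≤ partialDensity B x := by
  unfold partialDensity
  gcongr

open Classical in
lemma partialDensity_diff (h : A ⊆ B) (x : ℕ) :
    partialDensity (B \ A) x = partialDensity B x - partialDensity A x := by
  have hsub : {n ∈ Icc 1 x | n ∈ A} ⊆ {n ∈ Icc 1 x | n ∈ B} := by gcongr
  have hsdiff : {n ∈ Icc 1 x | n ∈ B \ A} = {n ∈ Icc 1 x | n ∈ B} \ {n ∈ Icc 1 x | n ∈ A} := by
    grind
  simp only [partialDensity, ← sub_div]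
  rw [← cast_card_sdiff hsub, ← hsdiff]
  congr!

open Classical in
lemma card_filter_mem_image_mul_left {k : ℕ} (hk : k ≠ 0) (A : Set ℕ) (x : ℕ) :
    #{n ∈ Icc 1 x | n ∈ (k * ·) '' A} = #{n ∈ Icc 1 (x / k) | n ∈ A} := by
  rw [← card_image_of_injective {n ∈ Icc 1 (x / k) | n ∈ A} (mul_right_injective₀ hk)]
  congr 1
  ext n
  simp only [mem_filter, mem_Icc, Finset.mem_image, Set.mem_image, Nat.le_div_iff_mul_le hk.bot_lt]
  constructor
  · rintro ⟨⟨hpos, hle⟩, j, hj, rfl⟩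
    exact ⟨j, ⟨⟨Nat.pos_of_mul_pos_left hpos, mul_comm k j ▸ hle⟩, hj⟩, rfl⟩
  · rintro ⟨j, ⟨⟨hpos, hle⟩, hj⟩, rfl⟩
    exact ⟨⟨Nat.mul_pos hk.bot_lt hpos, mul_comm k j ▸ hle⟩, j, hj, rfl⟩

lemma partialDensity_image_mul_left {k : ℕ} (hk : k ≠ 0) (A : Set ℕ) (x : ℕ) :
    partialDensity ((k * ·) '' A) x = partialDensity A (x / k) * ((x / k : ℕ) / x) := by
  rw [partialDensity, partialDensity, card_filter_mem_image_mul_left hk]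
  rcases eq_or_ne (x / k) 0 with hx | hx
  · simp [hx]
  · rw [div_mul_div_cancel₀ (Nat.cast_ne_zero.2 hx)]

open Classical in
lemma partialDensity_iUnion_le {ι : Type*} {f : ι → ℝ} {A : ι → Set ℕ} {x : ℕ}
    (hf : Summable f) (h : ∀ i, partialDensity (A i) x ≤ f i) :
    partialDensity (⋃ i, A i) x ≤ ∑' i, f i := by
  have hmem : ∀ n : {n ∈ Icc 1 x | n ∈ ⋃ i, A i}, ∃ i, (n : ℕ) ∈ A i := fun n =>
    Set.mem_iUnion.1 (mem_filter.1 n.2).2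
  choose index hindex using hmem
  let t : Finset ι := univ.image index
  have hcover : {n ∈ Icc 1 x | n ∈ ⋃ i, A i} ⊆ t.biUnion fun i => {n ∈ Icc 1 x | n ∈ A i} :=
    fun n hn => mem_biUnion.2 ⟨index ⟨n, hn⟩, mem_image_of_mem _ (mem_univ _),
      mem_filter.2 ⟨(mem_filter.1 hn).1, hindex ⟨n, hn⟩⟩⟩
  calc partialDensity (⋃ i, A i) x
      ≤ (∑ i ∈ t, #{n ∈ Icc 1 x | n ∈ A i} : ℕ) / x := by
        unfold partialDensity
        gcongr
        exact (card_le_card hcover).trans card_biUnion_le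
    _ = ∑ i ∈ t, partialDensity (A i) x := by
        simp only [Nat.cast_sum, sum_div, partialDensity]
    _ ≤ ∑ i ∈ t, f i := sum_le_sum fun i _ => h i
    _ ≤ ∑' i, f i := hf.sum_le_tsum t fun i _ => (partialDensity_nonneg (A i) x).trans (h i)

lemma partialDensity_setOf_dvd_le (k x : ℕ) : partialDensity {n | k ∣ n} x ≤ 1 / k := by
  have hcard : #{n ∈ Icc 1 x | k ∣ n} = x / k := Nat.Ioc_filter_dvd_card_eq_div x k
  have hfloor : ((x / k : ℕ) : ℝ) ≤ 1 / k * x := by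
    rw [one_div_mul_eq_div]
    exact Nat.cast_div_le
  refine div_le_of_le_mul₀ (Nat.cast_nonneg x) (by positivity) ?_
  simpa only [Set.mem_ofPred_eq, hcard] using hfloor

lemma hasDensity_univ : HasDensity Set.univ 1 := by
  refine tendsto_const_nhds.congr' ?_
  filter_upwards [eventually_ne_atTop 0] with x hx
  simp [partialDensity, hx]

lemma HasDensity.diff (hB : HasDensity B b) (hA : HasDensity A a) (h : A ⊆ B) :
    HasDensity (B \ A) (b - a) :=
  (Tendsto.sub hB hA).congr fun x => (partialDensity_diff h x).symm

lemma tendsto_natCast_div_div_atTop (k : ℕ) :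
    Tendsto (fun x : ℕ => ((x / k : ℕ) : ℝ) / x) atTop (𝓝 (1 / k)) := by
  have h := (tendsto_nat_floor_mul_div_atTop (R := ℝ) (a := 1 / k) (by positivity)).comp
    tendsto_natCast_atTop_atTop
  refine h.congr fun x => ?_
  simp only [Function.comp_apply, one_div_mul_eq_div, Nat.floor_div_eq_div]

lemma HasDensity.image_mul_left (hA : HasDensity A a) {k : ℕ} (hk : k ≠ 0) :
    HasDensity ((k * ·) '' A) (a * (1 / k)) :=
  ((hA.comp (Nat.tendsto_div_const_atTop hk)).mul (tendsto_natCast_div_div_atTop k)).congr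
    fun x => (partialDensity_image_mul_left hk A x).symm

end Density

section Sieve

variable {ι : Type*} {m : ι → ℕ}

/-- The set of naturals that survive sifting by the moduli `m i` with `i ∈ s`. -/
def siftedSet (m : ι → ℕ) (s : Set ι) : Set ℕ := {n | ∀ i ∈ s, ¬ m i ∣ n}

lemma siftedSet_anti (m : ι → ℕ) : Antitone (siftedSet m) :=
  fun _ _ hst _ hn i hi => hn i (hst hi)

lemma siftedSet_insert (s : Set ι) (q : ι) :
    siftedSet m (insert q s) = siftedSet m s \ {n | m q ∣ n} := by
  ext n
  exact Set.forall_mem_insert.trans and_comm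

lemma image_mul_left_siftedSet {s : Set ι} {q : ι} (hcop : ∀ i ∈ s, (m i).Coprime (m q)) :
    (m q * ·) '' siftedSet m s = siftedSet m s ∩ {n | m q ∣ n} := by
  have hdvd : ∀ i ∈ s, ∀ j, m i ∣ m q * j ↔ m i ∣ j := fun i hi j => (hcop i hi).dvd_mul_left
  ext n
  constructor
  · rintro ⟨j, hj, rfl⟩
    exact ⟨fun i hi => (hdvd i hi j).not.2 (hj i hi), dvd_mul_right _ _⟩
  · rintro ⟨hn, j, rfl⟩
    exact ⟨j, fun i hi => (hdvd i hi j).not.1 (hn i hi), rfl⟩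

lemma hasDensity_siftedSet_finset (hm : ∀ i, m i ≠ 0)
    (hcop : Pairwise (Function.onFun Nat.Coprime m)) (s : Finset ι) :
    HasDensity (siftedSet m s) (∏ i ∈ s, (1 - 1 / (m i : ℝ))) := by
  classical
  induction s using Finset.induction_on with
  | empty => simpa [siftedSet] using hasDensity_univ
  | insert q s hq ih =>
    have himage : (m q * ·) '' siftedSet m s = siftedSet m s ∩ {n | m q ∣ n} :=
      image_mul_left_siftedSet fun i hi => hcop (ne_of_mem_of_not_mem hi hq)
    have hdiff := ih.diff (ih.image_mul_left (hm q)) (himage ▸ Set.inter_subset_left)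
    rwa [himage, Set.sdiff_self_inter, ← siftedSet_insert, ← coe_insert, ← mul_one_sub, mul_comm,
      ← prod_insert (f := fun i => 1 - 1 / (m i : ℝ)) hq] at hdiff

lemma siftedSet_diff_subset (s : Set ι) :
    siftedSet m s \ siftedSet m Set.univ ⊆ ⋃ i : {i // i ∉ s}, {n | m i ∣ n} := by
  rintro n ⟨hn, hdvd⟩
  obtain ⟨i, -, hi⟩ : ∃ i ∈ Set.univ, m i ∣ n := by simpa [siftedSet] using hdvd
  exact Set.mem_iUnion.2 ⟨⟨i, fun his => hn i his hi⟩, hi⟩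

lemma partialDensity_siftedSet_sub_le (hsum : Summable fun i => 1 / (m i : ℝ)) (s : Set ι)
    (x : ℕ) :
    partialDensity (siftedSet m s) x - partialDensity (siftedSet m Set.univ) x ≤
      ∑' i : {i // i ∉ s}, 1 / (m i : ℝ) := by
  rw [← partialDensity_diff (siftedSet_anti m s.subset_univ)]
  exact (partialDensity_mono (siftedSet_diff_subset s) x).trans
    (partialDensity_iUnion_le (hsum.subtype _) fun i => partialDensity_setOf_dvd_le (m i) x)

lemma tendstoUniformly_partialDensity_siftedSet (hsum : Summable fun i => 1 / (m i : ℝ)) :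
    TendstoUniformly (fun s : Finset ι => partialDensity (siftedSet m s))
      (partialDensity (siftedSet m Set.univ)) atTop := by
  rw [Metric.tendstoUniformly_iff]
  intro ε hε
  filter_upwards [(tendsto_tsum_compl_atTop_zero fun i => 1 / (m i : ℝ)).eventually_lt_const hε]
    with s hs x
  have hmono := partialDensity_mono (siftedSet_anti m (s : Set ι).subset_univ) x
  rw [dist_comm, Real.dist_eq, abs_of_nonneg (sub_nonneg.2 hmono)]
  exact (partialDensity_siftedSet_sub_le hsum s x).trans_lt hs

lemma tendsto_prod_one_sub_of_summable {f : ι → ℝ} (hf : Summable f) :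
    Tendsto (fun s : Finset ι => ∏ i ∈ s, (1 - f i)) atTop (𝓝 (∏' i, (1 - f i))) := by
  have hmul : Multipliable fun i => 1 - f i := by
    simpa only [sub_eq_add_neg] using Real.multipliable_one_add_of_summable hf.neg
  exact hmul.hasProd

theorem stmt_14_general (hm : ∀ i, m i ≠ 0) (hcop : Pairwise (Function.onFun Nat.Coprime m))
    (hsum : Summable fun i => 1 / (m i : ℝ)) :
    HasDensity {n | ∀ i, ¬ m i ∣ n} (∏' i, (1 - 1 / (m i : ℝ))) := by
  have hlim : HasDensity (siftedSet m Set.univ) (∏' i, (1 - 1 / (m i : ℝ))) :=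
    (tendstoUniformly_partialDensity_siftedSet hsum).tendsto_of_eventually_tendsto
      (Eventually.of_forall (hasDensity_siftedSet_finset hm hcop))
      (tendsto_prod_one_sub_of_summable hsum)
  simpa only [siftedSet, Set.mem_univ, forall_const] using hlim

end Sieve

lemma pairwise_coprime_primes_pow_self :
    Pairwise (Function.onFun Nat.Coprime fun p : Nat.Primes => (p : ℕ) ^ (p : ℕ)) :=
  fun p q hpq => Nat.coprime_pow_primes _ _ p.2 q.2 (Subtype.coe_injective.ne hpq)

lemma summable_one_div_primes_pow_self :
    Summable fun p : Nat.Primes => 1 / (((p : ℕ) ^ (p : ℕ) : ℕ) : ℝ) := by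
  refine (summable_geometric_two.comp_injective Subtype.coe_injective).of_nonneg_of_le
    (fun p => by positivity) fun p => ?_
  have hp : (2 : ℝ) ≤ (p : ℕ) := mod_cast p.2.two_le
  change 1 / (((p : ℕ) ^ (p : ℕ) : ℕ) : ℝ) ≤ (1 / 2) ^ (p : ℕ)
  rw [one_div_pow, Nat.cast_pow]
  gcongr

lemma isMNumber_iff_forall_primes {n : ℕ} :
    IsMNumber n ↔ ∀ p : Nat.Primes, ¬ (p : ℕ) ^ (p : ℕ) ∣ n :=
  ⟨fun h p => h p p.2, fun h p hp => h ⟨p, hp⟩⟩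

open Classical in
theorem stmt_14 :
    Filter.Tendsto
      (fun x : ℕ =>
        (((Finset.Icc 1 x).filter (fun n => IsMNumber n)).card : ℝ) / (x : ℝ))
      Filter.atTop (nhds alphaConst) := by
  change HasDensity {n | IsMNumber n} alphaConst
  simpa only [alphaConst, isMNumber_iff_forall_primes, Nat.cast_pow] using stmt_14_general
    (fun p : Nat.Primes => pow_ne_zero _ p.2.ne_zero)
    pairwise_coprime_primes_pow_self summable_one_div_primes_pow_self
end

section
/- Every strongly matchable positive integer is an M-number. -/
/-- A coprime matching from a finite set `A` of positive integers to a finite set `B`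
is a bijection `ψ : A → B` with `gcd(a, ψ(a)) = 1` for every `a ∈ A`. -/
def CoprimeMatching (A B : Finset ℕ) : Prop :=
  ∃ ψ : ℕ → ℕ, Set.BijOn ψ ↑A ↑B ∧ ∀ a ∈ A, Nat.gcd a (ψ a) = 1

/-- A positive integer `n` is strongly matchable if for every arithmetic progression
`{a, a+d, ..., a+(τ(n)-1)d}` of `τ(n)` positive integers with `gcd(a,d) = 1`, there is
a coprime matching from the set of divisors of `n` to it. -/
def StronglyMatchable (n : ℕ) : Prop :=
  ∀ a d : ℕ, 0 < a → 0 < d → Nat.gcd a d = 1 →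
    CoprimeMatching n.divisors
      ((Finset.range n.divisors.card).image (fun i => a + i * d))

/-!
The matching sends only divisors prime to `p` to multiples of `p`. If `n` has `v` factors `p`, then
exactly `τ(n) / (v + 1)` of its divisors are prime to `p`, whereas a progression of length `τ(n)`
starting at a multiple of `p` has at least `τ(n) / p` multiples of `p`. Hence `v < p`.
-/

open Finset

section Divisors

variable {n p : ℕ}

lemma divisors_filter_not_dvd (hp : p.Prime) :
    {c ∈ n.divisors | ¬p ∣ c} = (ordCompl[p] n).divisors := by
  obtain rfl | hn := eq_or_ne n 0
  · simp
  ext c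
  simp only [mem_filter, Nat.mem_divisors, and_iff_left hn,
    and_iff_left (Nat.ordCompl_pos p hn).ne']
  exact ⟨fun ⟨hcn, hpc⟩ ↦ Nat.dvd_ordCompl_of_dvd_not_dvd hcn hpc, fun hc ↦
    ⟨hc.trans (Nat.ordCompl_dvd n p), fun hpc ↦ Nat.not_dvd_ordCompl hp hn (hpc.trans hc)⟩⟩

lemma card_divisors_eq_mul_card_filter_not_dvd (hp : p.Prime) :
    #n.divisors = (n.factorization p + 1) * #{c ∈ n.divisors | ¬p ∣ c} := by
  obtain rfl | hn := eq_or_ne n 0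
  · simp
  have hcop : (ordProj[p] n).Coprime (ordCompl[p] n) := (Nat.coprime_ordCompl hp hn).pow_left _
  calc #n.divisors = #(ordProj[p] n * ordCompl[p] n).divisors := by
        rw [Nat.ordProj_mul_ordCompl_eq_self]
    _ = #(ordProj[p] n).divisors * #(ordCompl[p] n).divisors := hcop.card_divisors_mul
    _ = (n.factorization p + 1) * #{c ∈ n.divisors | ¬p ∣ c} := by
        rw [divisors_filter_not_dvd hp, Nat.divisors_prime_pow hp, card_map, card_range]

end Divisors

lemma le_mul_card_filter_dvd_arithProg {p a d : ℕ} (hp : 0 < p) (hpa : p ∣ a) (hd : 0 < d)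
    (N : ℕ) : N ≤ p * #{b ∈ (range N).image (fun i ↦ a + i * d) | p ∣ b} := by
  have hcard : N ⌈/⌉ p ≤ #{b ∈ (range N).image (fun i ↦ a + i * d) | p ∣ b} := by
    rw [← card_range (N ⌈/⌉ p)]
    refine card_le_card_of_injOn (fun j ↦ a + p * j * d) (fun j hj ↦ ?_) fun i _ j _ hij ↦ ?_
    · have hjN : p * j < N := by
        simpa only [coe_range, Set.mem_Iio, ← not_le, ceilDiv_le_iff_le_mul hp] using hj
      exact mem_filter.2 ⟨mem_image_of_mem _ (mem_range.2 hjN),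
        dvd_add hpa ((dvd_mul_right p j).mul_right d)⟩
    · simpa [hp.ne', hd.ne'] using hij
  calc N ≤ p * (N ⌈/⌉ p) := le_smul_ceilDiv hp
    _ ≤ _ := Nat.mul_le_mul_left p hcard

namespace CoprimeMatching

variable {A B : Finset ℕ} {p a d : ℕ}

lemma card_filter_dvd_le (h : CoprimeMatching A B) (hp : p ≠ 1) :
    #{b ∈ B | p ∣ b} ≤ #{c ∈ A | ¬p ∣ c} := by
  obtain ⟨ψ, hψ, hcop⟩ := h
  refine card_le_card_of_surjOn ψ fun b hb ↦ ?_
  obtain ⟨hbB, hpb⟩ := mem_filter.1 hb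
  obtain ⟨c, hcA, rfl⟩ := hψ.surjOn hbB
  exact ⟨c, mem_filter.2 ⟨hcA, fun hpc ↦ hp (Nat.eq_one_of_dvd_coprimes (hcop c hcA) hpc hpb)⟩, rfl⟩

lemma card_le_mul_card_filter_not_dvd
    (h : CoprimeMatching A ((range #A).image fun i ↦ a + i * d))
    (hp : 1 < p) (hpa : p ∣ a) (hd : 0 < d) : #A ≤ p * #{c ∈ A | ¬p ∣ c} :=
  (le_mul_card_filter_dvd_arithProg (Nat.zero_lt_of_lt hp) hpa hd #A).trans
    (Nat.mul_le_mul_left p (h.card_filter_dvd_le hp.ne'))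

end CoprimeMatching

theorem stmt_15_general {n p a d : ℕ} (hn : n ≠ 0) (hp : p.Prime) (hpa : p ∣ a) (hd : 0 < d)
    (h : CoprimeMatching n.divisors ((range #n.divisors).image fun i ↦ a + i * d)) :
    ¬p ^ p ∣ n := by
  rw [hp.pow_dvd_iff_le_factorization hn, not_le]
  have hle : (n.factorization p + 1) * #{c ∈ n.divisors | ¬p ∣ c} ≤
      p * #{c ∈ n.divisors | ¬p ∣ c} := by
    rw [← card_divisors_eq_mul_card_filter_not_dvd hp]
    exact h.card_le_mul_card_filter_not_dvd hp.one_lt hpa hd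
  have hone : 1 ∈ {c ∈ n.divisors | ¬p ∣ c} :=
    mem_filter.2 ⟨Nat.one_mem_divisors.2 hn, hp.not_dvd_one⟩
  exact Nat.le_of_mul_le_mul_right hle (card_pos.2 ⟨1, hone⟩)

theorem stmt_15 (n : ℕ) (hn : 0 < n) (h : StronglyMatchable n) : IsMNumber n :=
  fun p hp ↦ stmt_15_general hn.ne' hp dvd_rfl one_pos
    (h p 1 hp.pos one_pos (Nat.gcd_one_right p))
end

section
/- If n is a strongly matchable positive integer and p is a prime not dividing n, then p^{p−1}·n is strongly matchable. -/
/-!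
A progression of length `p * t` and difference `d` splits, according to the index modulo `p`, into
`p` progressions of length `t` and difference `p * d`, and the divisors of `p ^ (p - 1) * n` split
into the `p` layers `p ^ e * D(n)`, `e < p`. If `a` and `d` are coprime, each of the `p` pieces has
a coprime matching from `D(n)`: dividing it by the gcd of its first term and its difference, which
divides `p`, gives a progression covered by strong matchability. At most one piece contains
multiples of `p`. It is given to the layer `e = 0`; the other pieces can be given to the other
layers in any order.
-/

namespace CoprimeMatching

variable {A B : Finset ℕ}

lemma symm (h : CoprimeMatching A B) : CoprimeMatching B A := by
  obtain ⟨ψ, hψ, hcop⟩ := h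
  have hinv := hψ.invOn_invFunOn
  have hbij : Set.BijOn (Function.invFunOn ψ A) B A := hψ.symm hinv.symm
  refine ⟨_, hbij, fun b hb ↦ ?_⟩
  simpa only [hinv.2 hb, Nat.gcd_comm] using hcop _ (hbij.mapsTo hb)

lemma image_mul_right {c : ℕ} (hc : c ≠ 0) (h : CoprimeMatching A B)
    (hA : ∀ x ∈ A, x.Coprime c) : CoprimeMatching A (B.image (c * ·)) := by
  obtain ⟨ψ, hψ, hcop⟩ := h
  refine ⟨fun x ↦ c * ψ x, ?_, fun x hx ↦ (hA x hx).mul_right (hcop x hx)⟩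
  rw [Finset.coe_image]
  exact (mul_right_injective₀ hc).injOn.bijOn_image.comp hψ

lemma image_mul_left {c : ℕ} (hc : c ≠ 0) (h : CoprimeMatching A B)
    (hB : ∀ y ∈ B, y.Coprime c) : CoprimeMatching (A.image (c * ·)) B :=
  (h.symm.image_mul_right hc hB).symm

lemma biUnion {ι κ : Type*} {s : Finset ι} {t : Finset κ} {σ : ι → κ}
    {A : ι → Finset ℕ} {B : κ → Finset ℕ} (hσ : Set.BijOn σ s t)
    (hA : (s : Set ι).PairwiseDisjoint A) (hB : (t : Set κ).PairwiseDisjoint B)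
    (h : ∀ i ∈ s, CoprimeMatching (A i) (B (σ i))) :
    CoprimeMatching (s.biUnion A) (t.biUnion B) := by
  choose! ψ hψ hcop using h
  have hglue : ∀ x, ∃ y, ∀ i ∈ s, x ∈ A i → ψ i x = y := fun x ↦ by
    by_cases hx : ∃ i ∈ s, x ∈ A i
    · obtain ⟨i, hi, hxi⟩ := hx
      exact ⟨ψ i x, fun j hj hxj ↦ by rw [hA.elim_finset hj hi x hxj hxi]⟩
    · exact ⟨0, fun i hi hxi ↦ absurd ⟨i, hi, hxi⟩ hx⟩
  choose φ hφ using hglue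
  have hbij : ∀ i ∈ s, Set.BijOn φ (A i) (B (σ i)) := fun i hi ↦
    (hψ i hi).congr fun x hx ↦ hφ x i hi hx
  refine ⟨φ, ⟨fun x hx ↦ ?_, fun x hx y hy hxy ↦ ?_, fun b hb ↦ ?_⟩, fun x hx ↦ ?_⟩
  · obtain ⟨i, hi, hxi⟩ := Finset.mem_biUnion.1 hx
    exact Finset.mem_biUnion.2 ⟨σ i, hσ.mapsTo hi, (hbij i hi).mapsTo hxi⟩
  · obtain ⟨i, hi, hxi⟩ := Finset.mem_biUnion.1 hx
    obtain ⟨j, hj, hyj⟩ := Finset.mem_biUnion.1 hy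
    have hσ_eq : σ i = σ j := hB.elim_finset (hσ.mapsTo hi) (hσ.mapsTo hj) (φ x)
      ((hbij i hi).mapsTo hxi) (hxy ▸ (hbij j hj).mapsTo hyj)
    obtain rfl : i = j := hσ.injOn hi hj hσ_eq
    exact (hbij i hi).injOn hxi hyj hxy
  · obtain ⟨k, hk, hbk⟩ := Finset.mem_biUnion.1 hb
    obtain ⟨i, hi, rfl⟩ := hσ.surjOn hk
    obtain ⟨x, hx, rfl⟩ := (hbij i hi).surjOn hbk
    exact ⟨x, Finset.mem_biUnion.2 ⟨i, hi, hx⟩, rfl⟩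
  · obtain ⟨i, hi, hxi⟩ := Finset.mem_biUnion.1 hx
    exact hφ x i hi hxi ▸ hcop i hi x hxi

end CoprimeMatching

/-- The arithmetic progression `{a, a + d, …, a + (t - 1) * d}` as a set. It has fewer than `t`
elements when `d = 0` and `1 < t`. -/
def arithProg (a d t : ℕ) : Finset ℕ :=
  (Finset.range t).image fun i ↦ a + i * d

lemma image_mul_arithProg (c a d t : ℕ) :
    (arithProg a d t).image (c * ·) = arithProg (c * a) (c * d) t := by
  simp only [arithProg, Finset.image_image, Function.comp_def, mul_add, mul_left_comm]

lemma modEq_of_mem_arithProg {a d t x : ℕ} (hx : x ∈ arithProg a d t) : x ≡ a [MOD d] := by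
  obtain ⟨i, -, rfl⟩ := Finset.mem_image.1 hx
  simp [Nat.ModEq]

lemma arithProg_mul (a d m t : ℕ) :
    arithProg a d (m * t) = (Finset.range m).biUnion fun j ↦ arithProg (a + j * d) (m * d) t := by
  ext x
  simp only [arithProg, Finset.mem_image, Finset.mem_biUnion, Finset.mem_range]
  constructor
  · rintro ⟨i, hi, rfl⟩
    have hm : 0 < m := Nat.pos_of_mul_pos_right (Nat.zero_lt_of_lt hi)
    refine ⟨i % m, Nat.mod_lt i hm, i / m, Nat.div_lt_of_lt_mul hi, ?_⟩
    conv_rhs => rw [← Nat.mod_add_div i m]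
    ring
  · rintro ⟨j, hj, k, hk, rfl⟩
    refine ⟨j + m * k, ?_, by ring⟩
    calc j + m * k < m * (k + 1) := by rw [mul_add]; lia
      _ ≤ m * t := Nat.mul_le_mul_left m hk

lemma pairwiseDisjoint_arithProg {d : ℕ} (hd : d ≠ 0) (a m t : ℕ) :
    (Finset.range m : Set ℕ).PairwiseDisjoint fun j ↦ arithProg (a + j * d) (m * d) t := by
  intro i hi j hj hij
  refine Finset.disjoint_left.2 fun x hxi hxj ↦ hij ?_
  have hmod : a + i * d ≡ a + j * d [MOD m * d] :=
    (modEq_of_mem_arithProg hxi).symm.trans (modEq_of_mem_arithProg hxj)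
  have hij_mod : i ≡ j [MOD m] := Nat.ModEq.mul_right_cancel' hd (hmod.add_left_cancel' a)
  exact hij_mod.eq_of_lt_of_lt (Finset.mem_range.1 hi) (Finset.mem_range.1 hj)

lemma modEq_of_dvd_add_mul {a d m i j : ℕ} (had : a.Coprime d) (hi : m ∣ a + i * d)
    (hj : m ∣ a + j * d) : i ≡ j [MOD m] := by
  have hmd : m.Coprime d := Nat.Coprime.of_dvd_left hi (by simpa using had)
  have hmod : a + i * d ≡ a + j * d [MOD m] :=
    hi.modEq_zero_nat.trans hj.modEq_zero_nat.symm
  exact (hmod.add_left_cancel' a).cancel_right_of_coprime hmd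

lemma exists_forall_dvd_add_mul_eq {a d m : ℕ} (hm : 0 < m) (had : a.Coprime d) :
    ∃ j₀ < m, ∀ j < m, m ∣ a + j * d → j = j₀ := by
  by_cases hex : ∃ j₀ < m, m ∣ a + j₀ * d
  · obtain ⟨j₀, hj₀, hdvd₀⟩ := hex
    exact ⟨j₀, hj₀, fun j hj hdvd ↦ (modEq_of_dvd_add_mul had hdvd hdvd₀).eq_of_lt_of_lt hj hj₀⟩
  · exact ⟨0, hm, fun j hj hdvd ↦ absurd ⟨j, hj, hdvd⟩ hex⟩

lemma divisors_prime_pow_mul {p : ℕ} (hp : p.Prime) (k n : ℕ) :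
    (p ^ k * n).divisors =
      (Finset.range (k + 1)).biUnion fun e ↦ n.divisors.image (p ^ e * ·) := by
  ext x
  simp [Nat.divisors_mul, Nat.divisors_prime_pow hp, Finset.mem_mul]

lemma card_divisors_prime_pow_mul {p n : ℕ} (hp : p.Prime) (hpn : ¬ p ∣ n) (k : ℕ) :
    (p ^ k * n).divisors.card = (k + 1) * n.divisors.card := by
  have hcop : (p ^ k).Coprime n := ((hp.coprime_iff_not_dvd).2 hpn).pow_left k
  rw [hcop.card_divisors_mul, Nat.divisors_prime_pow hp, Finset.card_map, Finset.card_range]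

lemma pairwise_disjoint_image_pow_mul {p : ℕ} {A : Finset ℕ} (hp : p ≠ 0)
    (hA : ∀ x ∈ A, ¬ p ∣ x) :
    Pairwise (Function.onFun Disjoint fun e ↦ A.image (p ^ e * ·)) := by
  have hmult : ∀ e, ∀ x ∈ A, multiplicity p (p ^ e * x) = e := fun e x hx ↦
    multiplicity_eq_of_dvd_of_not_dvd (dvd_mul_right _ _) fun hdvd ↦
      hA x hx (Nat.dvd_of_mul_dvd_mul_left (pow_pos hp.bot_lt e) (pow_succ p e ▸ hdvd))
  intro e f hef
  refine Finset.disjoint_left.2 fun y hye hyf ↦ hef ?_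
  obtain ⟨x, hx, rfl⟩ := Finset.mem_image.1 hye
  obtain ⟨z, hz, hzx⟩ := Finset.mem_image.1 hyf
  rw [← hmult e x hx, ← hmult f z hz, hzx]

lemma StronglyMatchable.coprimeMatching_arithProg {n a d : ℕ} (h : StronglyMatchable n)
    (ha : 0 < a) (hd : 0 < d) (hcop : n.Coprime (a.gcd d)) :
    CoprimeMatching n.divisors (arithProg a d n.divisors.card) := by
  obtain ⟨a', d', hcop', ha', hd'⟩ := Nat.exists_coprime a d
  have ha'_pos : 0 < a' := Nat.pos_of_mul_pos_right (ha.trans_eq ha')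
  have hd'_pos : 0 < d' := Nat.pos_of_mul_pos_right (hd.trans_eq hd')
  have hmatch : CoprimeMatching n.divisors (arithProg a' d' n.divisors.card) :=
    h a' d' ha'_pos hd'_pos hcop'
  have hscaled := hmatch.image_mul_right (Nat.gcd_pos_of_pos_left d ha).ne' fun m hm ↦
    hcop.of_dvd_left (Nat.dvd_of_mem_divisors hm)
  rwa [image_mul_arithProg, mul_comm, ← ha', mul_comm, ← hd'] at hscaled

lemma StronglyMatchable.coprimeMatching_image_pow_mul {n p a d e j : ℕ} (hp : p.Prime)
    (hpn : ¬ p ∣ n) (h : StronglyMatchable n) (ha : 0 < a) (hd : 0 < d) (had : a.Coprime d)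
    (hj : p ∣ a + j * d → e = 0) :
    CoprimeMatching (n.divisors.image (p ^ e * ·))
      (arithProg (a + j * d) (p * d) n.divisors.card) := by
  have hgcd : (a + j * d).gcd (p * d) ∣ p := by
    have hjd : d.Coprime (a + j * d) := by simpa using had.symm
    exact hjd.gcd_mul_right_cancel_right p ▸ Nat.gcd_dvd_right _ _
  have hcop : n.Coprime ((a + j * d).gcd (p * d)) :=
    ((hp.coprime_iff_not_dvd.2 hpn).of_dvd_left hgcd).symm
  refine (h.coprimeMatching_arithProg (by lia) (Nat.mul_pos hp.pos hd) hcop).image_mul_left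
    (pow_ne_zero e hp.ne_zero) fun x hx ↦ ?_
  rcases eq_or_ne e 0 with rfl | he
  · simp
  · have hxp : x ≡ a + j * d [MOD p] := (modEq_of_mem_arithProg hx).of_mul_right d
    have hpx : ¬ p ∣ x := fun hdvd ↦ he (hj ((hxp.dvd_iff dvd_rfl).1 hdvd))
    exact ((hp.coprime_iff_not_dvd.2 hpx).pow_left e).symm

theorem stmt_16 (n p : ℕ) (hn : 0 < n) (hp : p.Prime) (hpn : ¬ p ∣ n)
    (h : StronglyMatchable n) : StronglyMatchable (p ^ (p - 1) * n) := by
  intro a d ha hd had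
  change CoprimeMatching _ (arithProg a d _)
  obtain ⟨j₀, hj₀, hj₀_unique⟩ := exists_forall_dvd_add_mul_eq hp.pos had
  have hswap : Set.BijOn (Equiv.swap 0 j₀) (Finset.range p) (Finset.range p) :=
    Equiv.swap_bijOn_self (by simp [hp.pos, hj₀])
  have hdivisors : ∀ m ∈ n.divisors, ¬ p ∣ m := fun m hm hpm ↦
    hpn (hpm.trans (Nat.dvd_of_mem_divisors hm))
  rw [card_divisors_prime_pow_mul hp hpn, divisors_prime_pow_mul hp, Nat.sub_add_cancel hp.one_le,
    arithProg_mul]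
  refine CoprimeMatching.biUnion hswap
    ((pairwise_disjoint_image_pow_mul hp.ne_zero hdivisors).set_pairwise _)
    (pairwiseDisjoint_arithProg hd.ne' a p _) fun e he ↦ ?_
  refine h.coprimeMatching_image_pow_mul hp hpn ha hd had fun hdvd ↦ ?_
  have hswap_e : Equiv.swap 0 j₀ e = j₀ :=
    hj₀_unique _ (Finset.mem_range.1 (hswap.mapsTo he)) hdvd
  exact (Equiv.swap 0 j₀).injective (hswap_e.trans (Equiv.swap_apply_left 0 j₀).symm)
end

section
/- For every prime p, the number M_p = ∏_{q ≤ p, q prime} q^{q−1} (the product taken over all primes q ≤ p) is matchable. -/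
open scoped Function

lemma Matchable.of_injOn {n : ℕ} {f : ℕ → ℕ}
    (hmaps : Set.MapsTo f (Finset.Icc 1 n.divisors.card) n.divisors)
    (hinj : Set.InjOn f (Finset.Icc 1 n.divisors.card))
    (hcop : ∀ k ∈ Finset.Icc 1 n.divisors.card, (f k).Coprime k) : Matchable n := by
  have hsurj : Set.SurjOn f (Finset.Icc 1 n.divisors.card) n.divisors :=
    Finset.surjOn_of_injOn_of_card_le f hmaps hinj (by simp)
  have hbij : Set.BijOn f (Finset.Icc 1 n.divisors.card) n.divisors := ⟨hmaps, hinj, hsurj⟩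
  have hinv := hbij.invOn_invFunOn
  have hbij' := hbij.symm hinv.symm
  refine ⟨_, hbij', fun d hd => ?_⟩
  simpa only [hinv.2 hd] using hcop _ (hbij'.mapsTo hd)

lemma modEq_finset_prod_iff {ι : Type*} {S : Finset ι} {m : ι → ℕ}
    (hm : (S : Set ι).Pairwise (Nat.Coprime on m)) {a b : ℕ} :
    a ≡ b [MOD ∏ i ∈ S, m i] ↔ ∀ i ∈ S, a ≡ b [MOD m i] := by
  have hlist : S.toList.Pairwise (Nat.Coprime on m) :=
    S.nodup_toList.pairwise_of_forall_ne fun i hi j hj hij =>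
      hm (Finset.mem_toList.1 hi) (Finset.mem_toList.1 hj) hij
  simpa only [Finset.prod_map_toList, Finset.mem_toList] using
    Nat.modEq_list_map_prod_iff (a := a) (b := b) hlist

section PrimeSet

variable {S : Finset ℕ}

lemma pairwise_coprime_of_forall_prime (hS : ∀ q ∈ S, q.Prime) :
    (S : Set ℕ).Pairwise Nat.Coprime :=
  fun q hq r hr => (Nat.coprime_primes (hS q hq) (hS r hr)).2

lemma card_divisors_prod_prime_pow (hS : ∀ q ∈ S, q.Prime) (e : ℕ → ℕ) :
    (∏ q ∈ S, q ^ e q).divisors.card = ∏ q ∈ S, (e q + 1) := by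
  have hcop : (S : Set ℕ).Pairwise (Nat.Coprime on fun q => q ^ e q) :=
    (pairwise_coprime_of_forall_prime hS).imp fun _ _ h => h.pow _ _
  rw [← ArithmeticFunction.sigma_zero_apply,
    ArithmeticFunction.isMultiplicative_sigma.map_prod _ S hcop]
  exact Finset.prod_congr rfl fun q hq =>
    ArithmeticFunction.sigma_zero_apply_prime_pow (hS q hq)

lemma factorization_prod_prime_pow (hS : ∀ q ∈ S, q.Prime) (e : ℕ → ℕ) {r : ℕ} (hr : r ∈ S) :
    (∏ q ∈ S, q ^ e q).factorization r = e r :=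
  calc (∏ q ∈ S, q ^ e q).factorization r
    _ = ∑ q ∈ S, (q ^ e q).factorization r :=
      Nat.factorization_prod_apply fun q hq => pow_ne_zero _ (hS q hq).ne_zero
    _ = ∑ q ∈ S, if q = r then e q else 0 :=
      Finset.sum_congr rfl fun q hq => by rw [(hS q hq).factorization_pow, Finsupp.single_apply]
    _ = e r := by rw [Finset.sum_ite_eq', if_pos hr]

/-- The integer whose exponent at each `q ∈ S` is the residue of `k` modulo `q`; for a finite set
`S` of primes, this is the divisor of `∏ q ∈ S, q ^ (q - 1)` matched with `k`. -/
def residueDivisor (S : Finset ℕ) (k : ℕ) : ℕ := ∏ q ∈ S, q ^ (k % q)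

lemma residueDivisor_dvd (hS : ∀ q ∈ S, 0 < q) (k : ℕ) :
    residueDivisor S k ∣ ∏ q ∈ S, q ^ (q - 1) :=
  Finset.prod_dvd_prod_of_dvd _ _ fun q hq =>
    pow_dvd_pow q (Nat.le_sub_one_of_lt (Nat.mod_lt k (hS q hq)))

lemma coprime_residueDivisor (hS : ∀ q ∈ S, q.Prime) (k : ℕ) :
    (residueDivisor S k).Coprime k := by
  refine Nat.Coprime.prod_left fun q hq => ?_
  by_cases hdvd : q ∣ k
  · rw [Nat.mod_eq_zero_of_dvd hdvd, pow_zero]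
    exact Nat.coprime_one_left k
  · exact ((hS q hq).coprime_iff_not_dvd.2 hdvd).pow_left _

lemma residueDivisor_eq_iff_modEq (hS : ∀ q ∈ S, q.Prime) {k l : ℕ} :
    residueDivisor S k = residueDivisor S l ↔ k ≡ l [MOD ∏ q ∈ S, q] := by
  rw [modEq_finset_prod_iff (pairwise_coprime_of_forall_prime hS)]
  constructor
  · intro h q hq
    have hfact := congrArg (fun n => n.factorization q) h
    simpa only [residueDivisor, factorization_prod_prime_pow hS _ hq, Nat.ModEq] using hfact
  · exact fun h => Finset.prod_congr rfl fun q hq => congrArg (q ^ ·) (h q hq)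

lemma residueDivisor_injOn (hS : ∀ q ∈ S, q.Prime) :
    Set.InjOn (residueDivisor S) (Finset.Icc 1 (∏ q ∈ S, q)) := by
  intro k hk l hl h
  rw [← Finset.Ico_add_one_right_eq_Icc, add_comm] at hk hl
  exact Nat.mod_injOn_Ico 1 _ hk hl ((residueDivisor_eq_iff_modEq hS).1 h)

end PrimeSet

theorem stmt_19_general (S : Finset ℕ) (hS : ∀ q ∈ S, q.Prime) :
    Matchable (∏ q ∈ S, q ^ (q - 1)) := by
  have hcard : (∏ q ∈ S, q ^ (q - 1)).divisors.card = ∏ q ∈ S, q := by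
    rw [card_divisors_prod_prime_pow hS]
    exact Finset.prod_congr rfl fun q hq => Nat.sub_add_cancel (hS q hq).one_le
  have hne : ∏ q ∈ S, q ^ (q - 1) ≠ 0 :=
    Finset.prod_ne_zero_iff.2 fun q hq => pow_ne_zero _ (hS q hq).ne_zero
  apply Matchable.of_injOn (f := residueDivisor S)
  · exact fun k _ => Nat.mem_divisors.2 ⟨residueDivisor_dvd (fun q hq => (hS q hq).pos) k, hne⟩
  · rw [hcard]
    exact residueDivisor_injOn hS
  · exact fun k _ => coprime_residueDivisor hS k

theorem stmt_19 (p : ℕ) (hp : p.Prime) :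
    Matchable (∏ q ∈ (Finset.range (p + 1)).filter Nat.Prime, q ^ (q - 1)) :=
  stmt_19_general _ fun _ hq => (Finset.mem_filter.1 hq).2
end
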